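/- There exists ε₀ > 0 such that for every z ∈ U with 0 < ‖z‖ ≤ ε₀ and f(z) ≠ 0, the two vectors z and i•grad log f(z) are linearly independent over ℝ. (Consequently each member X_θ of the canonical pencil of f meets every sufficiently small sphere about the origin transversally: every holomorphic germ is d-regular.) -/

import Mathlib

/-!
If `z` and `i • grad log f z` are linearly dependent over `ℝ`, then
`∂ⱼf(z) = i a f(z) conj(zⱼ)` for some real `a` and all `j`
(`exists_real_of_not_linearIndependent`). Such bad points are excluded near the origin by a curve
selection argument, the heuristic being this. On a curve `z(s) = s^β u(s)` of bad points with
`β > 0` and `u(0) ≠ 0`, apply the Euler derivation `D = s d/ds`. By the chain rule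
`D f = ∑ ∂ⱼf D zⱼ`, so `D f / f = i a ∑ conj(zⱼ) D zⱼ`. The left side tends to the order of `f` on
the curve, a positive real number, while `∑ conj(zⱼ) D zⱼ` is `|s^β|²` times a quantity with
positive real limit `β ∑ |uⱼ(0)|²`. As `a` is real, this is a contradiction.

No analytic curve selection lemma is used. Instead, curves are replaced by *formal arcs*: ring
homomorphisms from holomorphic germs to Hahn series with exponents in `ℚ≥0` and coefficients in `ℂ`
(`IsArc`). Formal curve selection (`arcProp`) states that for a prime ideal `p` of germs and `h ∉ p`
there is an arc that kills `p` but not `h`. It is proved by induction on the dimension: Weierstrass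
division (`Hol.weierstrass`) makes the quotient by `p` finite over germs in fewer variables, and arcs
lift through finite extensions because the field of Hahn series is algebraically closed
(`HOm.isAlgClosed`). The chain rule along formal arcs is `IsArc.chain_rule`.

The relation at bad points is not holomorphic, as it involves conjugates. Given a sequence of bad
points tending to the origin, one writes `z = τ u` with `τ` the largest coordinate, normalises the
real factor to a point `(ε, s)` of the unit circle, and passes to limits of `u`, `ε`, `s` along an
ultrafilter. The functions of `(τ, u, w, ε, i s)`, with `w` standing for `conj u`, that vanish at
almost all of these points form a prime ideal (`vanishingIdeal`), and an arc killing it but not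
`τ f(τ u)` satisfies the relation formally, with the constant term of `w` conjugate to that of `u`.
Comparing constant terms of logarithmic derivatives (`arc_contradiction`) ends the proof.
-/

/-- `grad log f (x) = grad f(x) / conj (f x)`, where `grad f(x)` is the Hermitian
gradient of `f` at `x`: the unique vector with `⟪grad f x, v⟫ = Df(x)(v)` for all `v`. -/
noncomputable def gradLog {n : ℕ} (f : EuclideanSpace ℂ (Fin n) → ℂ)
    (x : EuclideanSpace ℂ (Fin n)) : EuclideanSpace ℂ (Fin n) :=
  ((starRingEnd ℂ) (f x))⁻¹ • gradient f x

open Filter Topology Metric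

/-! ### Hahn series and valuations on algebraic extensions -/

/-- The field of Hahn series in `s` with rational exponents and complex coefficients, which
contains all Puiseux series. -/
abbrev HOm : Type := HahnSeries ℚ ℂ

/-- The ring of Hahn series with exponents `≥ 0`, as a valuation subring. -/
noncomputable def hahnInt : ValuationSubring HOm where
  carrier := {x | 0 ≤ x.orderTop}
  mul_mem' := by
    intro a b ha hb
    simp only [Set.mem_ofPred_eq] at *
    rw [HahnSeries.orderTop_mul]; positivity
  one_mem' := by simp
  add_mem' := by
    intro a b ha hb
    exact (le_inf ha hb).trans HahnSeries.min_orderTop_le_orderTop_add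
  zero_mem' := by simp
  neg_mem' := by intro a ha; simpa using ha
  mem_or_inv_mem' := by
    intro x
    by_cases hx : x = 0
    · left; simp [hx]
    have h : x.orderTop + x⁻¹.orderTop = 0 := by
      rw [← HahnSeries.orderTop_mul, mul_inv_cancel₀ hx]; simp
    rw [← HahnSeries.order_eq_orderTop_of_ne_zero hx,
      ← HahnSeries.order_eq_orderTop_of_ne_zero (inv_ne_zero hx)] at h
    have h' : x.order + x⁻¹.order = 0 := by exact_mod_cast h
    simp only [Set.mem_ofPred_eq]
    rw [← HahnSeries.order_eq_orderTop_of_ne_zero hx,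
      ← HahnSeries.order_eq_orderTop_of_ne_zero (inv_ne_zero hx)]
    rcases le_total 0 x.order with h0 | h0
    · left; exact_mod_cast h0
    · right
      have : 0 ≤ x⁻¹.order := by linarith
      exact_mod_cast this

lemma mem_hahnInt {x : HOm} : x ∈ hahnInt ↔ 0 ≤ x.orderTop := Iff.rfl

namespace HahnClosed

variable {M : Type*} [Field M] [Algebra HOm M] {Γ₀ : Type*}
  [LinearOrderedCommGroupWithZero Γ₀] (v : Valuation M Γ₀)

/-- The valuation ring of `v` dominates the ring of Hahn series of nonnegative order. -/
structure Extends : Prop where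
  le_one : ∀ x : HOm, 0 ≤ x.orderTop → v (algebraMap HOm M x) ≤ 1
  lt_one : ∀ x : HOm, 0 < x.orderTop → v (algebraMap HOm M x) < 1

/-- The monomial `s ^ q`, as an element of the extension `M` of the field of Hahn series. -/
noncomputable def mono (M : Type*) [Field M] [Algebra HOm M] (q : ℚ) : M :=
  algebraMap HOm M (HahnSeries.single q 1)

lemma mono_add (q r : ℚ) : mono M (q + r) = mono M q * mono M r := by
  unfold mono; rw [← map_mul, HahnSeries.single_mul_single, one_mul]

lemma mono_zero : mono M 0 = 1 := by
  unfold mono; simp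

lemma mono_ne (q : ℚ) : mono M q ≠ 0 := by
  unfold mono; simp

lemma mono_pow (q : ℚ) (n : ℕ) : mono M q ^ n = mono M (n * q) := by
  unfold mono; rw [← map_pow, HahnSeries.single_pow]; simp

variable {v}
lemma val_mono_lt (hv : Extends v) {q r : ℚ} (h : q < r) : v (mono M r) < v (mono M q) := by
  have e : mono M r = mono M q * mono M (r - q) := by rw [← mono_add]; congr 1; ring
  have h1 : v (mono M (r - q)) < 1 := by
    apply hv.lt_one
    rw [HahnSeries.orderTop_single one_ne_zero]
    exact_mod_cast sub_pos.2 h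
  have h0 : v (mono M q) ≠ 0 := (Valuation.ne_zero_iff _).2 (mono_ne q)
  rw [e, map_mul]
  calc v (mono M q) * v (mono M (r-q)) < v (mono M q) * 1 := by
        apply mul_lt_mul_of_pos_left h1 (zero_lt_iff.2 h0)
    _ = _ := mul_one _

lemma val_mono_lt_iff (hv : Extends v) {q r : ℚ} : v (mono M r) < v (mono M q) ↔ q < r := by
  refine ⟨fun h => ?_, val_mono_lt hv⟩
  by_contra hc
  rcases (not_lt.1 hc).eq_or_lt with rfl | h'
  · exact lt_irrefl _ h
  · exact lt_asymm h (val_mono_lt hv h')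

lemma val_mono_le (hv : Extends v) {q r : ℚ} (h : q ≤ r) : v (mono M r) ≤ v (mono M q) := by
  rcases h.eq_or_lt with rfl | h
  · exact le_rfl
  · exact (val_mono_lt hv h).le

lemma val_of_orderTop_zero (hv : Extends v) {x : HOm} (h : x.orderTop = 0) :
    v (algebraMap HOm M x) = 1 := by
  have hx : x ≠ 0 := by rintro rfl; simp at h
  have h' : x.orderTop + x⁻¹.orderTop = 0 := by
    rw [← HahnSeries.orderTop_mul, mul_inv_cancel₀ hx]; simp
  rw [h, zero_add] at h'
  apply le_antisymm (hv.le_one x h.ge)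
  have := hv.le_one _ h'.ge
  rw [map_inv₀, map_inv₀] at this
  exact (inv_le_one₀ (zero_lt_iff.2 ((Valuation.ne_zero_iff _).2 (by simpa using hx)))).1 this

lemma val_eq (hv : Extends v) {x : HOm} (hx : x ≠ 0) :
    v (algebraMap HOm M x) = v (mono M x.order) := by
  set y : HOm := HahnSeries.single (-x.order) 1 * x with hy
  have e : x = HahnSeries.single x.order 1 * y := by
    rw [hy, ← mul_assoc, HahnSeries.single_mul_single]; simp
  have hy0 : y.orderTop = 0 := by
    rw [hy, HahnSeries.orderTop_mul, HahnSeries.orderTop_single one_ne_zero,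
      ← HahnSeries.order_eq_orderTop_of_ne_zero hx, ← WithTop.coe_add]; simp
  conv_lhs => rw [e, map_mul, map_mul, val_of_orderTop_zero hv hy0, mul_one]
  rfl

lemma val_lt_mono (hv : Extends v) {x : HOm} {q : ℚ} (h : ∀ r ≤ q, x.coeff r = 0) :
    v (algebraMap HOm M x) < v (mono M q) := by
  by_cases hx : x = 0
  · rw [hx, map_zero, map_zero]; exact zero_lt_iff.2 ((Valuation.ne_zero_iff _).2 (mono_ne q))
  rw [val_eq hv hx]
  apply val_mono_lt hv
  by_contra hc
  exact HahnSeries.coeff_order_eq_zero.not.2 hx (h _ (not_lt.1 hc))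

/-- An algebraic element has the value of a monomial: in an algebraic equation for `y` two terms
share the dominant value, which determines the value of a power of `y`. -/
lemma exists_val_eq (hv : Extends v) [Algebra.IsAlgebraic HOm M] {y : M} (hy : y ≠ 0) :
    ∃ q : ℚ, v (y * mono M q) = 1 := by
  obtain ⟨P, hP0, hP⟩ := Algebra.IsAlgebraic.isAlgebraic (R := HOm) y
  rw [Polynomial.aeval_eq_sum_range] at hP
  set s := P.support with hs
  have hsum : ∑ i ∈ s, P.coeff i • y ^ i = 0 := by
    rw [← hP, ← Polynomial.aeval_eq_sum_range, Polynomial.aeval_def, Polynomial.eval₂_eq_sum,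
      Polynomial.sum]
    simp [Algebra.smul_def, hs]
  have hterm : ∀ i ∈ s, P.coeff i • y ^ i ≠ 0 := by
    intro i hi
    rw [Algebra.smul_def]
    have : P.coeff i ≠ 0 := Polynomial.mem_support_iff.1 hi
    simp [this, hy]
  obtain ⟨j, hj, hmax⟩ := Finset.exists_max_image s (fun i => v (P.coeff i • y ^ i))
    (Polynomial.support_nonempty.2 hP0)
  obtain ⟨i, hi, hij, hve⟩ : ∃ i ∈ s, i ≠ j ∧ v (P.coeff i • y ^ i) = v (P.coeff j • y ^ j) := by
    by_contra hc
    push Not at hc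
    have := Valuation.map_sum_eq_of_lt v hj (fun i hi => by
      simp only [Finset.mem_sdiff, Finset.mem_singleton] at hi
      exact lt_of_le_of_ne (hmax i hi.1) (hc i hi.1 hi.2))
    rw [hsum, map_zero] at this
    exact (Valuation.ne_zero_iff v).2 (hterm j hj) this.symm
  have key : ∀ i j : ℕ, i ∈ s → j ∈ s → j < i →
      v (P.coeff i • y ^ i) = v (P.coeff j • y ^ j) → ∃ q : ℚ, v (y * mono M q) = 1 := by
    intro i j hi hj hlt h
    have hci : P.coeff i ≠ 0 := Polynomial.mem_support_iff.1 hi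
    have hcj : P.coeff j ≠ 0 := Polynomial.mem_support_iff.1 hj
    rw [Algebra.smul_def, Algebra.smul_def, map_mul, map_mul, val_eq hv hci, val_eq hv hcj] at h
    obtain ⟨b, rfl⟩ := Nat.exists_eq_add_of_lt hlt
    set a := (P.coeff (j + b + 1)).order
    set c := (P.coeff j).order
    refine ⟨(a - c) / (b + 1 : ℕ), ?_⟩
    have hb : ((b + 1 : ℕ) : ℚ) ≠ 0 := by positivity
    have h2 : v (y * mono M ((a - c) / (b + 1 : ℕ))) ^ (b + 1) = 1 := by
      rw [← map_pow, mul_pow, mono_pow, mul_div_cancel₀ _ hb]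
      have e : mono M a = mono M (a - c) * mono M c := by rw [← mono_add]; congr 1; ring
      rw [e, map_mul, add_assoc, pow_add, map_mul] at h
      have hyj : v (y ^ j) ≠ 0 := (Valuation.ne_zero_iff v).2 (pow_ne_zero _ hy)
      have hcc : v (mono M c) ≠ 0 := (Valuation.ne_zero_iff v).2 (mono_ne c)
      rw [map_mul]
      apply mul_right_cancel₀ (mul_ne_zero hcc hyj)
      rw [one_mul]
      refine Eq.trans ?_ h
      rw [mul_comm (v (y ^ (b + 1))), mul_mul_mul_comm, mul_comm (v (y ^ (b + 1)))]
    exact (pow_eq_one_iff_of_nonneg zero_le (Nat.succ_ne_zero b)).1 h2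
  rcases lt_or_gt_of_ne hij with h | h
  · exact key j i hj hi h hve.symm
  · exact key i j hi hj h hve

end HahnClosed

namespace HahnClosed

variable {M : Type*} [Field M] [Algebra HOm M] {Γ₀ : Type*}
  [LinearOrderedCommGroupWithZero Γ₀] {v : Valuation M Γ₀}

lemma val_C_le (hv : Extends v) (c : ℂ) : v (algebraMap HOm M (HahnSeries.C c)) ≤ 1 := by
  apply hv.le_one
  exact HahnSeries.le_orderTop_iff_forall.2 (by
    intro j hj
    have : j < 0 := by exact_mod_cast hj
    simp [HahnSeries.C_apply, this.ne])

/-- An algebraic element of value `1` is congruent to a complex constant: it reduces to a root of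
the reduction of its equation, and `ℂ` is algebraically closed. -/
lemma exists_sub_C_lt (hv : Extends v) [Algebra.IsAlgebraic HOm M] {z : M} (hz : v z = 1) :
    ∃ c : ℂ, v (z - algebraMap HOm M (HahnSeries.C c)) < 1 := by
  obtain ⟨P, hP0, hP⟩ := Algebra.IsAlgebraic.isAlgebraic (R := HOm) z
  obtain ⟨j, hj, hmin⟩ := Finset.exists_min_image P.support (fun i => (P.coeff i).order)
    (Polynomial.support_nonempty.2 hP0)
  set m := (P.coeff j).order with hm
  have hcj : P.coeff j ≠ 0 := Polynomial.mem_support_iff.1 hj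
  -- the coefficients rescaled so that their minimal order is zero
  set a : ℕ → HOm := fun i => HahnSeries.single (-m) 1 * P.coeff i with ha
  have hcoeff : ∀ i q, (a i).coeff q = (P.coeff i).coeff (q + m) := by
    intro i q
    have := HahnSeries.coeff_single_mul_add (r := (1 : ℂ)) (x := P.coeff i) (a := q + m) (b := -m)
    simpa [ha] using this
  have hlow : ∀ i, ∀ r < 0, (a i).coeff r = 0 := by
    intro i r hr
    rw [hcoeff]
    by_cases hi : P.coeff i = 0
    · simp [hi]
    apply HahnSeries.coeff_eq_zero_of_lt_order
    have := hmin i (Polynomial.mem_support_iff.2 hi)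
    linarith
  set Q : Polynomial ℂ := ∑ i ∈ Finset.range (P.natDegree + 1),
    Polynomial.monomial i ((a i).coeff 0) with hQ
  have hQj : Q.coeff j ≠ 0 := by
    have hjr : j ∈ Finset.range (P.natDegree + 1) :=
      Finset.mem_range.2 (Nat.lt_succ_of_le (Polynomial.le_natDegree_of_ne_zero hcj))
    rw [hQ, Polynomial.finsetSum_coeff, Finset.sum_eq_single j]
    · rw [Polynomial.coeff_monomial_same, hcoeff, zero_add]
      exact HahnSeries.coeff_order_eq_zero.not.2 hcj
    · intro b _ hb; simp [Polynomial.coeff_monomial, hb]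
    · intro h; exact absurd hjr h
  have hQ0 : Q ≠ 0 := by rintro h; simp [h] at hQj
  set σ : ℂ →+* M := (algebraMap HOm M).comp HahnSeries.C with hσ
  -- the reduction of `P` at `z` is a sum of elements of positive value
  have hval : v (Q.eval₂ σ z) < 1 := by
    have e0 : ∑ i ∈ Finset.range (P.natDegree + 1), algebraMap HOm M (a i) * z ^ i = 0 := by
      rw [Polynomial.aeval_eq_sum_range] at hP
      simp only [ha, map_mul, mul_assoc, ← Finset.mul_sum]
      simp only [Algebra.smul_def] at hP
      rw [hP, mul_zero]
    have e1 : Q.eval₂ σ z = ∑ i ∈ Finset.range (P.natDegree + 1),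
        algebraMap HOm M (HahnSeries.C ((a i).coeff 0) - a i) * z ^ i := by
      simp only [map_sub, sub_mul, Finset.sum_sub_distrib, e0, sub_zero]
      rw [hQ, Polynomial.eval₂_finsetSum]
      simp [Polynomial.eval₂_monomial, hσ]
    rw [e1]
    apply Valuation.map_sum_lt v one_ne_zero
    intro i _
    rw [map_mul, map_pow, hz, one_pow, mul_one, ← map_one v, ← mono_zero (M := M)]
    apply val_lt_mono hv
    intro r hr
    rcases hr.lt_or_eq with hr | rfl
    · simp [HahnSeries.C_apply, hr.ne, hlow i r hr]
    · simp [HahnSeries.C_apply]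
  have hfac := (IsAlgClosed.splits Q).eq_prod_roots
  by_contra hc
  push Not at hc
  have hone : ∀ c : ℂ, v (z - σ c) = 1 := by
    intro c
    apply le_antisymm _ (hc c)
    exact (v.map_sub _ _).trans (max_le hz.le (val_C_le hv c))
  have : v (Q.eval₂ σ z) = 1 := by
    rw [hfac, Polynomial.eval₂_mul, Polynomial.eval₂_C, Polynomial.eval₂_multiset_prod, map_mul,
      map_multiset_prod]
    have h1 : v (σ Q.leadingCoeff) = 1 := by
      apply val_of_orderTop_zero hv
      rw [HahnSeries.C_apply, HahnSeries.orderTop_single]; rfl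
      simpa using hQ0
    rw [h1, one_mul]
    apply Multiset.prod_eq_one
    intro x hx
    simp only [Multiset.map_map, Multiset.mem_map, Function.comp] at hx
    obtain ⟨c, _, rfl⟩ := hx
    simpa using hone c
  exact absurd this hval.ne

/-- Every non-zero element of `M` has a leading monomial `c * s ^ q`. -/
lemma exists_lead (hv : Extends v) [Algebra.IsAlgebraic HOm M] {y : M} (hy : y ≠ 0) :
    ∃ (q : ℚ) (c : ℂ), c ≠ 0 ∧
      v (y - algebraMap HOm M (HahnSeries.single q c)) < v (mono M q) := by
  obtain ⟨q, hq⟩ := exists_val_eq hv hy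
  obtain ⟨c, hc⟩ := exists_sub_C_lt hv hq
  refine ⟨-q, c, ?_, ?_⟩
  · rintro rfl
    simp only [map_zero, sub_zero, hq, lt_irrefl] at hc
  · have e : y - algebraMap HOm M (HahnSeries.single (-q) c) =
        (y * mono M q - algebraMap HOm M (HahnSeries.C c)) * mono M (-q) := by
      have h1 : mono M q * mono M (-q) = 1 := by rw [← mono_add, add_neg_cancel, mono_zero]
      have h2 : algebraMap HOm M (HahnSeries.single (-q) c) =
          algebraMap HOm M (HahnSeries.C c) * mono M (-q) := by
        unfold mono; rw [← map_mul, HahnSeries.C_apply, HahnSeries.single_mul_single]; simp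
      rw [h2, sub_mul, mul_assoc, h1, mul_one]
    rw [e, map_mul]
    calc _ < 1 * v (mono M (-q)) := mul_lt_mul_of_pos_right hc
            (zero_lt_iff.2 ((Valuation.ne_zero_iff _).2 (mono_ne _)))
      _ = _ := one_mul _

/-- `x` is an initial approximation of `y`: the error is smaller than each monomial of `x`. -/
def Approx (v : Valuation M Γ₀) (y : M) (x : HOm) : Prop :=
  ∀ q ∈ x.support, v (y - algebraMap HOm M x) < v (mono M q)

/-- Approximations of `y` agree up to every exponent that both of them reach. -/
lemma Approx.agree (hv : Extends v) {y : M} {x x₁ : HOm} (hx : Approx v y x)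
    (hx₁ : Approx v y x₁) {q q₁ : ℚ}
    (hq : q ∈ x.support) (hq₁ : q₁ ∈ x₁.support) (hle : q₁ ≤ q) {r : ℚ} (hr : r ≤ q₁) :
    x.coeff r = x₁.coeff r := by
  by_contra hne
  have hd : x - x₁ ≠ 0 := by
    intro h; apply hne; rw [sub_eq_zero.1 h]
  have ho : (x - x₁).order ≤ r := by
    apply HahnSeries.order_le_of_coeff_ne_zero
    simpa [sub_eq_zero] using hne
  have h1 := val_eq hv hd
  have e : algebraMap HOm M (x - x₁) =
      (y - algebraMap HOm M x₁) - (y - algebraMap HOm M x) := by rw [map_sub]; ring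
  have h2 : v (algebraMap HOm M (x - x₁)) < v (mono M q₁) := by
    rw [e]
    refine (v.map_sub _ _).trans_lt (max_lt (hx₁ _ hq₁) ?_)
    exact (hx _ hq).trans_le (val_mono_le hv hle)
  rw [h1, val_mono_lt_iff hv] at h2
  linarith

/-- The field of Hahn series is maximally complete: the approximations of `y` have a common
extension `xs`, and if the error `y - xs` were nonzero, its leading monomial could be added. -/
lemma exists_algebraMap_eq (hv : Extends v) [Algebra.IsAlgebraic HOm M] (y : M) :
    ∃ x : HOm, algebraMap HOm M x = y := by
  classical
  set S : Set ℚ := {q | ∃ x, Approx v y x ∧ q ∈ x.support} with hS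
  have hch : ∀ q : ℚ, ∃ c : ℂ, (∀ x, Approx v y x → q ∈ x.support → x.coeff q = c) ∧
      (q ∉ S → c = 0) := by
    intro q
    by_cases hq : q ∈ S
    · obtain ⟨x, hx, hqx⟩ := hq
      refine ⟨x.coeff q, fun x' hx' hq' => Approx.agree hv hx' hx hq' hqx le_rfl le_rfl,
        fun h => ?_⟩
      exact absurd ⟨x, hx, hqx⟩ h
    · exact ⟨0, fun x hx hqx => absurd ⟨x, hx, hqx⟩ hq, fun _ => rfl⟩
  choose g hg hg0 using hch
  have hsupp : ∀ q, g q ≠ 0 → q ∈ S := fun q h => by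
    by_contra hq; exact h (hg0 q hq)
  -- below an exponent of an approximation `x`, `g` is given by `x`
  have hagree : ∀ x, Approx v y x → ∀ q ∈ x.support, ∀ r ≤ q, g r = x.coeff r := by
    intro x hx q hq r hr
    by_cases hrS : r ∈ S
    · obtain ⟨x', hx', hrx'⟩ := hrS
      rw [← hg r x' hx' hrx']
      exact (Approx.agree hv hx hx' hq hrx' hr le_rfl).symm
    · rw [hg0 r hrS]
      by_contra h
      exact hrS ⟨x, hx, fun h' => h h'.symm⟩
  have hpwo : (Function.support g).IsPWO := by
    rw [Set.isPWO_iff_isWF, Set.isWF_iff_no_descending_seq]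
    intro u hu hmem
    obtain ⟨x, hx, hux⟩ := hsupp _ (hmem 0)
    have hwf := x.isWF_support
    rw [Set.isWF_iff_no_descending_seq] at hwf
    refine hwf u hu ?_
    intro k
    have : u k ≤ u 0 := hu.antitone (Nat.zero_le k)
    have h2 := hmem k
    rw [Function.mem_support, hagree x hx _ hux _ this] at h2
    exact h2
  set xs : HOm := ⟨g, hpwo⟩ with hxs
  have hxsA : Approx v y xs := by
    intro q hq
    obtain ⟨x, hx, hqx⟩ := hsupp q hq
    have e : y - algebraMap HOm M xs = (y - algebraMap HOm M x) + algebraMap HOm M (x - xs) := by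
      rw [map_sub]; ring
    rw [e]
    refine (v.map_add _ _).trans_lt (max_lt (hx q hqx) ?_)
    apply val_lt_mono hv
    intro r hr
    have := hagree x hx q hqx r hr
    simp [hxs, this]
  by_contra hne
  push Not at hne
  obtain ⟨q, c, hc, hlt⟩ := exists_lead hv (sub_ne_zero.2 (hne xs).symm)
  have hvq : v (mono M q) = v (y - algebraMap HOm M xs) := by
    have h1 : v (algebraMap HOm M (HahnSeries.single q c)) = v (mono M q) := by
      rw [val_eq hv (by simpa using hc), HahnSeries.order_single hc]
    rw [← h1] at hlt ⊢
    exact (Valuation.map_eq_of_sub_lt v hlt).symm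
  have hqout : q ∉ xs.support := fun h => by
    have := hxsA q h; rw [hvq] at this; exact lt_irrefl _ this
  have hx2 : Approx v y (xs + HahnSeries.single q c) := by
    intro r hr
    have e : y - algebraMap HOm M (xs + HahnSeries.single q c) =
      y - algebraMap HOm M xs - algebraMap HOm M (HahnSeries.single q c) := by rw [map_add]; ring
    rw [e]
    by_cases hrq : r = q
    · rw [hrq]; exact hlt
    · have : r ∈ xs.support := by
        simpa [HahnSeries.coeff_single_of_ne hrq] using hr
      refine hlt.trans ?_
      rw [hvq]; exact hxsA r this
  apply hqout
  have hin : q ∈ (xs + HahnSeries.single q c).support := by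
    have : xs.coeff q = 0 := by simpa using hqout
    simp [this, hc]
  have := hagree _ hx2 q hin q le_rfl
  have h0 : xs.coeff q = 0 := by simpa using hqout
  have h3 : g q = 0 := h0
  rw [h3] at this
  exact absurd this.symm hin

end HahnClosed

/-- The field of Hahn series with rational exponents over `ℂ` is algebraically closed: its order
valuation extends to the algebraic closure, where `HahnClosed.exists_algebraMap_eq` applies. -/
instance HOm.isAlgClosed : IsAlgClosed HOm := by
  let M := AlgebraicClosure HOm
  obtain ⟨A, h, hloc⟩ := IsLocalRing.exists_factor_valuationRing
    ((algebraMap HOm M).comp hahnInt.subtype)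
  have hv : HahnClosed.Extends A.valuation := by
    have hle : ∀ x : HOm, 0 ≤ x.orderTop → A.valuation (algebraMap HOm M x) ≤ 1 := by
      intro x hx
      rw [ValuationSubring.valuation_le_one_iff]
      exact h ⟨x, hx⟩
    refine ⟨hle, fun x hx => ?_⟩
    refine lt_of_le_of_ne (hle x hx.le) fun h1 => ?_
    have hx0 : x ≠ 0 := by rintro rfl; simp at h1
    have hu : IsUnit ((((algebraMap HOm M).comp hahnInt.subtype).codRestrict A.toSubring h)
        ⟨x, hx.le⟩) := by
      have : A.valuation (((((algebraMap HOm M).comp hahnInt.subtype).codRestrict A.toSubring h)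
        ⟨x, hx.le⟩ : A) : M) = 1 := h1
      exact (ValuationSubring.valuation_eq_one_iff A _).2 this
    obtain ⟨u, hu⟩ := (hloc.map_nonunit _ hu)
    have h2 : x * ((u⁻¹ : (hahnInt)ˣ) : hahnInt).1 = 1 := by
      have := congrArg Subtype.val u.mul_inv
      rw [hu] at this
      exact this
    have h3 : x.orderTop + ((u⁻¹ : (hahnInt)ˣ) : hahnInt).1.orderTop = 0 := by
      rw [← HahnSeries.orderTop_mul, h2]; simp
    have h4 : 0 ≤ ((u⁻¹ : (hahnInt)ˣ) : hahnInt).1.orderTop := ((u⁻¹ : (hahnInt)ˣ) : hahnInt).2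
    have h5 : 0 < x.orderTop + ((u⁻¹ : (hahnInt)ˣ) : hahnInt).1.orderTop :=
      lt_of_lt_of_le hx (le_add_of_nonneg_right h4)
    rw [h3] at h5
    exact lt_irrefl _ h5
  have hs : Function.Surjective (algebraMap HOm M) := fun y => HahnClosed.exists_algebraMap_eq hv y
  refine IsAlgClosed.of_ringEquiv M HOm
    (RingEquiv.ofBijective _ ⟨(algebraMap HOm M).injective, hs⟩).symm

/-! ### The Euler derivation on Hahn series -/

namespace HOm

lemma orderTop_pos_iff {x : HOm} : 0 < x.orderTop ↔ ∀ r ≤ 0, x.coeff r = 0 := by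
  constructor
  · intro h r hr
    apply HahnSeries.coeff_eq_zero_of_lt_orderTop
    exact lt_of_le_of_lt (by exact_mod_cast hr) h
  · intro h
    by_contra hc
    have hx : x ≠ 0 := by rintro rfl; simp at hc
    rw [← HahnSeries.order_eq_orderTop_of_ne_zero hx] at hc
    have h2 : x.order ≤ 0 := by exact_mod_cast not_lt.1 hc
    exact HahnSeries.coeff_order_eq_zero.not.2 hx (h _ h2)

/-- The Euler derivation `s d/ds`, multiplying the coefficient at `s ^ q` by `q`. -/
noncomputable def D (x : HOm) : HOm :=
  ⟨fun q => (q : ℂ) * x.coeff q, x.isPWO_support.mono (fun q hq h => hq (by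
    simp [h]))⟩

@[simp] lemma D_coeff (x : HOm) (q : ℚ) : (D x).coeff q = (q : ℂ) * x.coeff q := rfl

lemma D_add (x y : HOm) : D (x + y) = D x + D y := by
  ext q; simp [mul_add]

lemma D_support (x : HOm) : (D x).support ⊆ x.support := by
  intro q hq h
  exact hq (by simp [h])

lemma D_mul (x y : HOm) : D (x * y) = x * D y + D x * y := by
  ext q
  rw [D_coeff, HahnSeries.coeff_add, HahnSeries.coeff_mul,
    HahnSeries.coeff_mul_right' y.isPWO_support (D_support y),
    HahnSeries.coeff_mul_left' x.isPWO_support (D_support x), Finset.mul_sum,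
    ← Finset.sum_add_distrib]
  apply Finset.sum_congr rfl
  intro ij hij
  rw [Finset.mem_antidiagonal] at hij
  rw [← hij.2.2]
  simp only [D_coeff]
  push_cast
  ring

lemma D_orderTop_pos {x : HOm} (hx : 0 ≤ x.orderTop) : 0 < (D x).orderTop := by
  rw [orderTop_pos_iff]
  intro r hr
  rcases hr.lt_or_eq with hr | rfl
  · rw [D_coeff, HahnSeries.coeff_eq_zero_of_lt_orderTop, mul_zero]
    exact lt_of_lt_of_le (by exact_mod_cast hr) hx
  · simp

lemma orderTop_le_D (x : HOm) : x.orderTop ≤ (D x).orderTop := by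
  rw [HahnSeries.le_orderTop_iff_forall]
  intro r hr
  rw [D_coeff, HahnSeries.coeff_eq_zero_of_lt_orderTop hr, mul_zero]

lemma orderTop_sub_C_pos {x : HOm} (hx : 0 ≤ x.orderTop) :
    0 < (x - HahnSeries.C (x.coeff 0)).orderTop := by
  rw [orderTop_pos_iff]
  intro r hr
  rcases hr.lt_or_eq with hr | rfl
  · rw [HahnSeries.coeff_sub, HahnSeries.coeff_eq_zero_of_lt_orderTop
      (lt_of_lt_of_le (by exact_mod_cast hr) hx)]
    simp [HahnSeries.C_apply, hr.ne]
  · simp [HahnSeries.C_apply]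

lemma coeff_zero_of_pos {x : HOm} (hx : 0 < x.orderTop) : x.coeff 0 = 0 :=
  orderTop_pos_iff.1 hx 0 le_rfl

lemma mul_pos_left {x y : HOm} (hx : 0 < x.orderTop) (hy : 0 ≤ y.orderTop) :
    0 < (x * y).orderTop := by
  rw [HahnSeries.orderTop_mul]
  exact lt_of_lt_of_le hx (le_add_of_nonneg_right hy)

lemma mul_nonneg {x y : HOm} (hx : 0 ≤ x.orderTop) (hy : 0 ≤ y.orderTop) :
    0 ≤ (x * y).orderTop := hahnInt.mul_mem x y hx hy

lemma add_nonneg {x y : HOm} (hx : 0 ≤ x.orderTop) (hy : 0 ≤ y.orderTop) :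
    0 ≤ (x + y).orderTop := hahnInt.add_mem x y hx hy

lemma C_nonneg (c : ℂ) : 0 ≤ (HahnSeries.C c : HOm).orderTop := 
  HahnSeries.le_orderTop_iff_forall.2 (by
    intro j hj
    have : j < 0 := by exact_mod_cast hj
    simp [HahnSeries.C_apply, this.ne])

lemma coeff_zero_mul {x y : HOm} (hx : 0 ≤ x.orderTop) (hy : 0 ≤ y.orderTop) :
    (x * y).coeff 0 = x.coeff 0 * y.coeff 0 := by
  have e : x * y = (x - HahnSeries.C (x.coeff 0)) * y + HahnSeries.C (x.coeff 0) * y := by ring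
  rw [e, HahnSeries.coeff_add, coeff_zero_of_pos (mul_pos_left (orderTop_sub_C_pos hx) hy)]
  simp [HahnSeries.C_apply]

/-- The logarithmic derivative of `y ≠ 0` is `order y` up to terms of positive order. -/
lemma logD {y : HOm} (hy : y ≠ 0) : ∃ l : HOm, D y = l * y ∧ 0 ≤ l.orderTop ∧
    l.coeff 0 = (y.order : ℂ) := by
  set m := D y - HahnSeries.C (y.order : ℂ) * y with hm
  have hm1 : (y.order : WithTop ℚ) < m.orderTop := by
    by_cases hm0 : m = 0
    · rw [hm0]; simp
    rw [← HahnSeries.order_eq_orderTop_of_ne_zero hm0]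
    norm_cast
    by_contra hc
    apply HahnSeries.coeff_order_eq_zero.not.2 hm0
    have hmc : ∀ q, m.coeff q = (q : ℂ) * y.coeff q - (y.order : ℂ) * y.coeff q := fun q => by
      rw [hm]; simp only [HahnSeries.coeff_sub, D_coeff, HahnSeries.C_mul_eq_smul, HahnSeries.coeff_smul,
        smul_eq_mul]
    rw [hmc]
    rcases (not_lt.1 hc).lt_or_eq with h | h
    · rw [HahnSeries.coeff_eq_zero_of_lt_order h]; simp
    · rw [h]; ring
  have hq : 0 < (m * y⁻¹).orderTop := by
    by_cases hm0 : m = 0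
    · rw [hm0]; simp
    have h : y.orderTop + y⁻¹.orderTop = 0 := by
      rw [← HahnSeries.orderTop_mul, mul_inv_cancel₀ hy]; simp
    rw [HahnSeries.orderTop_mul]
    rw [← HahnSeries.order_eq_orderTop_of_ne_zero hy,
      ← HahnSeries.order_eq_orderTop_of_ne_zero (inv_ne_zero hy)] at h
    rw [← HahnSeries.order_eq_orderTop_of_ne_zero hm0] at hm1 ⊢
    rw [← HahnSeries.order_eq_orderTop_of_ne_zero (inv_ne_zero hy)]
    norm_cast at *
    linarith
  refine ⟨m * y⁻¹ + HahnSeries.C (y.order : ℂ), ?_, add_nonneg hq.le (C_nonneg _), ?_⟩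
  · rw [add_mul, mul_assoc, inv_mul_cancel₀ hy, hm]; ring
  · rw [HahnSeries.coeff_add, coeff_zero_of_pos hq, HahnSeries.C_apply, HahnSeries.coeff_single_same, zero_add]

end HOm

/-! ### Holomorphy of maps into Banach spaces -/

lemma norm_dslope_le {k : ℂ → ℂ} {ρ M : ℝ} (hk : DifferentiableOn ℂ k (ball 0 ρ))
    (hM : ∀ z ∈ ball (0 : ℂ) ρ, ‖k z‖ ≤ M) {z : ℂ} (hz : z ∈ ball (0 : ℂ) ρ) :
    ‖dslope k 0 z‖ ≤ 2 * M / ρ := by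
  apply Complex.norm_dslope_le_div_of_mapsTo_ball hk _ hz
  have hρ : 0 < ρ := pos_of_mem_ball hz
  intro w hw
  rw [mem_closedBall, dist_eq_norm]
  calc ‖k w - k 0‖ ≤ ‖k w‖ + ‖k 0‖ := norm_sub_le _ _
    _ ≤ M + M := add_le_add (hM w hw) (hM 0 (mem_ball_self hρ))
    _ = 2 * M := by ring

/-- Second order Taylor estimate in one variable. -/
lemma norm_taylor_one {k : ℂ → ℂ} {ρ M : ℝ} (hρ : 1 < ρ) (hk : DifferentiableOn ℂ k (ball 0 ρ))
    (hM : ∀ z ∈ ball (0 : ℂ) ρ, ‖k z‖ ≤ M) :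
    ‖k 1 - k 0 - deriv k 0‖ ≤ 4 * M / ρ ^ 2 := by
  have h0 : ball (0 : ℂ) ρ ∈ 𝓝 (0 : ℂ) := ball_mem_nhds _ (by linarith)
  have h1 : (1 : ℂ) ∈ ball (0 : ℂ) ρ := by simpa using hρ
  have hd1 : DifferentiableOn ℂ (dslope k 0) (ball 0 ρ) :=
    (Complex.differentiableOn_dslope h0).2 hk
  have hb := norm_dslope_le hd1 (fun z hz => norm_dslope_le hk hM hz) h1
  have e1 := sub_smul_dslope k 0 1
  have e2 := sub_smul_dslope (dslope k 0) 0 1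
  rw [dslope_same k 0] at e2
  simp only [sub_zero, one_smul] at e1 e2
  rw [← e1, ← e2]
  refine hb.trans (le_of_eq ?_)
  field_simp
  ring

lemma tendsto_const_div_succ (C : ℝ) :
    Tendsto (fun m : ℕ => C / ((m : ℝ) + 1)) atTop (𝓝 0) := by
  have := (tendsto_one_div_add_atTop_nhds_zero_nat (𝕜 := ℝ)).const_mul C
  simpa [div_eq_mul_inv] using this

section Norming

variable {E B : Type*} [NormedAddCommGroup E] [NormedSpace ℂ E]
  [NormedAddCommGroup B] [NormedSpace ℂ B]

lemma scalar_line {g : E → ℂ} {x h : E} {r M : ℝ} (hd : DifferentiableOn ℂ g (ball x r))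
    (hM : ∀ y ∈ ball x r, ‖g y‖ ≤ M) (hr : 0 < r) (hh : h ≠ 0) :
    DifferentiableOn ℂ (fun s : ℂ => g (x + s • h)) (ball 0 (r / ‖h‖)) ∧
    (∀ z ∈ ball (0 : ℂ) (r / ‖h‖), ‖g (x + z • h)‖ ≤ M) ∧
    deriv (fun s : ℂ => g (x + s • h)) 0 = fderiv ℂ g x h := by
  have hn : 0 < ‖h‖ := norm_pos_iff.2 hh
  have hmem : ∀ z ∈ ball (0 : ℂ) (r / ‖h‖), x + z • h ∈ ball x r := by
    intro z hz
    rw [mem_ball_zero_iff, lt_div_iff₀ hn] at hz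
    simpa [norm_smul] using hz
  refine ⟨?_, fun z hz => hM _ (hmem z hz), ?_⟩
  · apply hd.comp _ hmem
    fun_prop
  · have h1 : HasFDerivAt g (fderiv ℂ g x) (x + (0 : ℂ) • h) := by
      rw [zero_smul, add_zero]
      exact (hd.differentiableAt (ball_mem_nhds _ hr)).hasFDerivAt
    have h2 : HasDerivAt (fun s : ℂ => x + s • h) h 0 := by
      simpa using ((hasDerivAt_id (0 : ℂ)).smul_const h).const_add x
    exact (h1.comp_hasDerivAt 0 h2).deriv

lemma scalar_taylor {g : E → ℂ} {x h : E} {r M : ℝ} (hd : DifferentiableOn ℂ g (ball x r))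
    (hM : ∀ y ∈ ball x r, ‖g y‖ ≤ M) (hh : ‖h‖ < r) :
    ‖g (x + h) - g x - fderiv ℂ g x h‖ ≤ 4 * M / r ^ 2 * ‖h‖ ^ 2 := by
  by_cases h0 : h = 0
  · simp [h0]
  have hn : 0 < ‖h‖ := norm_pos_iff.2 h0
  obtain ⟨h1, h2, h3⟩ := scalar_line hd hM (hn.trans hh) h0
  have := norm_taylor_one ((one_lt_div hn).2 hh) h1 h2
  rw [h3] at this
  simp only [one_smul, zero_smul, add_zero] at this
  refine this.trans (le_of_eq ?_)
  field_simp

lemma scalar_fderiv_bound {g : E → ℂ} {x h : E} {r M : ℝ} (hr : 0 < r)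
    (hd : DifferentiableOn ℂ g (ball x r))
    (hM : ∀ y ∈ ball x r, ‖g y‖ ≤ M) :
    ‖fderiv ℂ g x h‖ ≤ 2 * M / r * ‖h‖ := by
  by_cases h0 : h = 0
  · simp [h0]
  have hn : 0 < ‖h‖ := norm_pos_iff.2 h0
  obtain ⟨h1, h2, h3⟩ := scalar_line hd hM hr h0
  have := norm_dslope_le h1 h2 (mem_ball_self (by positivity))
  rw [dslope_same, h3] at this
  refine this.trans (le_of_eq ?_)
  field_simp

/-- A bounded map into a Banach space is holomorphic as soon as it is so after composition with
each functional of a norming family `S`. -/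
lemma differentiableAt_of_norming [CompleteSpace B] (S : Set (B →L[ℂ] ℂ))
    (hS1 : ∀ e ∈ S, ∀ b, ‖e b‖ ≤ ‖b‖)
    (hS : ∀ b C, 0 ≤ C → (∀ e ∈ S, ‖e b‖ ≤ C) → ‖b‖ ≤ C)
    {G : E → B} {x : E} {r M : ℝ} (hr : 0 < r) (hM : ∀ y ∈ ball x r, ‖G y‖ ≤ M)
    (hd : ∀ e ∈ S, DifferentiableOn ℂ (fun y => e (G y)) (ball x r)) :
    DifferentiableAt ℂ G x := by
  have hM0 : 0 ≤ M := (norm_nonneg _).trans (hM x (mem_ball_self hr))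
  have hMe : ∀ e ∈ S, ∀ y ∈ ball x r, ‖e (G y)‖ ≤ M := fun e he y hy =>
    (hS1 e he _).trans (hM y hy)
  set K := 4 * M / r ^ 2 with hK
  have hK0 : 0 ≤ K := by positivity
  have hunique : ∀ b : B, (∀ e ∈ S, e b = 0) → b = 0 := fun b hb => by
    have := hS b 0 le_rfl (fun e he => by rw [hb e he, norm_zero])
    simpa using this
  have hex : ∀ h : E, ∃ b : B, ∀ e ∈ S, e b = fderiv ℂ (fun y => e (G y)) x h := by
    intro h
    obtain ⟨m₀, hm₀⟩ := exists_nat_gt (‖h‖ / r)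
    set c : ℕ → B := fun m => ((m + m₀ + 1 : ℕ) : ℂ) •
      (G (x + ((m + m₀ + 1 : ℕ) : ℂ)⁻¹ • h) - G x) with hc
    have hest : ∀ m, ∀ e ∈ S, ‖e (c m) - fderiv ℂ (fun y => e (G y)) x h‖ ≤
        K * ‖h‖ ^ 2 / (m + 1) := by
      intro m e he
      set N : ℝ := ((m + m₀ + 1 : ℕ) : ℝ) with hN
      have hNpos : 0 < N := by positivity
      have hnorm : ‖((m + m₀ + 1 : ℕ) : ℂ)⁻¹ • h‖ = ‖h‖ / N := by
        rw [norm_smul, norm_inv, Complex.norm_natCast, div_eq_inv_mul]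
      have hlt : ‖((m + m₀ + 1 : ℕ) : ℂ)⁻¹ • h‖ < r := by
        rw [hnorm, div_lt_comm₀ hNpos hr]
        refine hm₀.trans_le ?_
        rw [hN]; exact Nat.cast_le.2 (by omega)
      have h1 := scalar_taylor (hd e he) (hMe e he) hlt
      have hne : ((m + m₀ + 1 : ℕ) : ℂ) ≠ 0 := by exact Nat.cast_ne_zero.2 (Nat.succ_ne_zero _)
      have e1 : e (c m) - fderiv ℂ (fun y => e (G y)) x h = ((m + m₀ + 1 : ℕ) : ℂ) *
          (e (G (x + ((m + m₀ + 1 : ℕ) : ℂ)⁻¹ • h)) - e (G x) -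
            fderiv ℂ (fun y => e (G y)) x (((m + m₀ + 1 : ℕ) : ℂ)⁻¹ • h)) := by
        simp only [hc, map_smul, map_sub, smul_eq_mul]
        field_simp
      rw [e1, norm_mul, Complex.norm_natCast]
      rw [hnorm] at h1
      calc _ ≤ N * (K * (‖h‖ / N) ^ 2) := by gcongr
        _ = K * ‖h‖ ^ 2 / N := by field_simp
        _ ≤ _ := by
          gcongr
          rw [hN]; push_cast; linarith [Nat.cast_nonneg (α := ℝ) m₀]
    have htend : Tendsto (fun m : ℕ => 2 * (K * ‖h‖ ^ 2) / ((m : ℝ) + 1)) atTop (𝓝 0) :=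
      tendsto_const_div_succ _
    have hcauchy : CauchySeq c := by
      apply cauchySeq_of_le_tendsto_0 _ _ htend
      intro n m N hn hm
      rw [dist_eq_norm]
      apply hS _ _ (by positivity)
      intro e he
      have e1 : e (c n - c m) = (e (c n) - fderiv ℂ (fun y => e (G y)) x h) -
        (e (c m) - fderiv ℂ (fun y => e (G y)) x h) := by rw [map_sub]; ring
      rw [e1]
      have hb : ∀ n : ℕ, N ≤ n → K * ‖h‖ ^ 2 / (n + 1) ≤ K * ‖h‖ ^ 2 / (N + 1) := by
        intro n hn
        gcongr
      calc _ ≤ _ := norm_sub_le _ _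
        _ ≤ K * ‖h‖ ^ 2 / (N + 1) + K * ‖h‖ ^ 2 / (N + 1) :=
          add_le_add ((hest n e he).trans (hb n hn)) ((hest m e he).trans (hb m hm))
        _ = _ := by ring
    obtain ⟨b, hb⟩ := cauchySeq_tendsto_of_complete hcauchy
    refine ⟨b, fun e he => ?_⟩
    have h1 : Tendsto (fun m => e (c m)) atTop (𝓝 (e b)) := (e.continuous.tendsto b).comp hb
    have h2 : Tendsto (fun m => e (c m)) atTop (𝓝 (fderiv ℂ (fun y => e (G y)) x h)) := by
      rw [tendsto_iff_norm_sub_tendsto_zero]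
      refine squeeze_zero (fun _ => norm_nonneg _) (fun m => hest m e he) ?_
      exact tendsto_const_div_succ _
    exact tendsto_nhds_unique h1 h2
  choose b hb using hex
  have hadd : ∀ h h', b (h + h') = b h + b h' := fun h h' => by
    rw [← sub_eq_zero]
    apply hunique
    intro e he
    simp [hb _ e he]
  have hsmul : ∀ (c : ℂ) h, b (c • h) = c • b h := fun c h => by
    rw [← sub_eq_zero]
    apply hunique
    intro e he
    simp [hb _ e he]
  let b' : E →L[ℂ] B := LinearMap.mkContinuous
    { toFun := b, map_add' := hadd, map_smul' := hsmul } (2 * M / r) (fun h => by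
      apply hS _ _ (by positivity)
      intro e he
      change ‖e (b h)‖ ≤ _
      rw [hb h e he]
      exact scalar_fderiv_bound hr (hd e he) (hMe e he))
  refine HasFDerivAt.differentiableAt (f' := b') ?_
  rw [hasFDerivAt_iff_isLittleO_nhds_zero]
  have hO : (fun h : E => G (x + h) - G x - b' h) =O[𝓝 0] fun h => ‖h‖ ^ 2 := by
    apply Asymptotics.IsBigO.of_bound K
    filter_upwards [ball_mem_nhds (0 : E) hr] with h hh
    rw [mem_ball_zero_iff] at hh
    rw [Real.norm_of_nonneg (by positivity)]
    apply hS _ _ (by positivity)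
    intro e he
    have := scalar_taylor (hd e he) (hMe e he) hh
    rw [map_sub, map_sub]
    change ‖_ - e (b h)‖ ≤ _
    rw [hb h e he]
    exact this
  refine hO.trans_isLittleO ?_
  have h2 : (fun h : E => ‖h‖ ^ 2) =o[𝓝 0] fun h => ‖h‖ ^ 1 :=
    (Asymptotics.isLittleO_pow_pow (𝕜 := ℝ) (by norm_num : 1 < 2)).comp_tendsto
      (tendsto_norm_zero)
  simp only [pow_one] at h2
  exact h2.of_norm_right

end Norming

/-! ### Bounded holomorphic functions on the unit disc -/

open scoped BoundedContinuousFunction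

/-- Extension by zero of a function on the unit disc. -/
noncomputable def discExt (h : ball (0 : ℂ) 1 →ᵇ ℂ) (z : ℂ) : ℂ :=
  open Classical in if hz : z ∈ ball (0 : ℂ) 1 then h ⟨z, hz⟩ else 0

lemma discExt_of_mem (h : ball (0 : ℂ) 1 →ᵇ ℂ) {z : ℂ} (hz : z ∈ ball (0 : ℂ) 1) :
    discExt h z = h ⟨z, hz⟩ := dif_pos hz

lemma discExt_add (a b : ball (0 : ℂ) 1 →ᵇ ℂ) (z : ℂ) :
    discExt (a + b) z = discExt a z + discExt b z := by
  by_cases hz : z ∈ ball (0 : ℂ) 1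
  · simp only [discExt_of_mem _ hz, BoundedContinuousFunction.add_apply]
  · simp only [discExt, dif_neg hz, add_zero]

lemma discExt_smul (c : ℂ) (b : ball (0 : ℂ) 1 →ᵇ ℂ) (z : ℂ) :
    discExt (c • b) z = c * discExt b z := by
  by_cases hz : z ∈ ball (0 : ℂ) 1
  · simp only [discExt_of_mem _ hz, BoundedContinuousFunction.smul_apply, smul_eq_mul]
  · simp only [discExt, dif_neg hz, mul_zero]

lemma discExt_mul (a b : ball (0 : ℂ) 1 →ᵇ ℂ) (z : ℂ) :
    discExt (a * b) z = discExt a z * discExt b z := by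
  by_cases hz : z ∈ ball (0 : ℂ) 1
  · simp only [discExt_of_mem _ hz, BoundedContinuousFunction.mul_apply]
  · simp only [discExt, dif_neg hz, mul_zero]

lemma norm_discExt_le (h : ball (0 : ℂ) 1 →ᵇ ℂ) (z : ℂ) : ‖discExt h z‖ ≤ ‖h‖ := by
  by_cases hz : z ∈ ball (0 : ℂ) 1
  · rw [discExt_of_mem _ hz]
    exact BoundedContinuousFunction.norm_coe_le_norm _ _
  · simp only [discExt, dif_neg hz, norm_zero, norm_nonneg]

/-- Bounded holomorphic functions on the unit disc, as a subalgebra of the bounded continuous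
functions. -/
noncomputable def hInfSub : Subalgebra ℂ (ball (0 : ℂ) 1 →ᵇ ℂ) where
  carrier := {h | DifferentiableOn ℂ (discExt h) (ball 0 1)}
  mul_mem' := by
    intro a b ha hb
    refine (DifferentiableOn.mul ha hb).congr fun z hz => ?_
    simp [discExt_of_mem _ hz]
  add_mem' := by
    intro a b ha hb
    refine (DifferentiableOn.add ha hb).congr fun z hz => ?_
    simp [discExt_of_mem _ hz]
  algebraMap_mem' := by
    intro c
    refine (differentiableOn_const c).congr fun z hz => ?_
    rw [discExt_of_mem _ hz]; rfl

namespace HInf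

lemma mem_iff {h : ball (0 : ℂ) 1 →ᵇ ℂ} :
    h ∈ hInfSub ↔ DifferentiableOn ℂ (discExt h) (ball 0 1) := Iff.rfl

lemma isClosed : IsClosed (hInfSub : Set (ball (0 : ℂ) 1 →ᵇ ℂ)) := by
  apply isSeqClosed_iff_isClosed.1
  intro u h hu hlim
  have hunif : TendstoUniformlyOn (fun n => discExt (u n)) (discExt h) atTop (ball 0 1) := by
    rw [Metric.tendstoUniformlyOn_iff]
    intro ε hε
    filter_upwards [Metric.tendsto_nhds.1 hlim ε hε] with n hn z hz
    rw [discExt_of_mem _ hz, discExt_of_mem _ hz, dist_comm]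
    exact (BoundedContinuousFunction.dist_coe_le_dist _).trans_lt hn
  exact hunif.tendstoLocallyUniformlyOn.differentiableOn (Eventually.of_forall hu) isOpen_ball

end HInf

/-- The Banach algebra of bounded holomorphic functions on the unit disc, with the sup norm. -/
def HInf : Type := hInfSub

namespace HInf

noncomputable instance : NormedCommRing HInf := inferInstanceAs (NormedCommRing hInfSub)

noncomputable instance : NormedAlgebra ℂ HInf := inferInstanceAs (NormedAlgebra ℂ hInfSub)

instance : CompleteSpace HInf := isClosed.completeSpace_coe

/-- Evaluation at a point of the disc (zero outside the disc). -/
noncomputable def ev (z : ℂ) : HInf →L[ℂ] ℂ :=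
  LinearMap.mkContinuous
    { toFun := fun h => discExt h.1 z
      map_add' := fun a b => discExt_add a.1 b.1 z
      map_smul' := fun c a => discExt_smul c a.1 z } 1 (fun h => by
        rw [one_mul]; exact norm_discExt_le h.1 z)

lemma ev_apply (z : ℂ) (h : HInf) : ev z h = discExt h.1 z := rfl

lemma ev_mul (z : ℂ) (h k : HInf) : ev z (h * k) = ev z h * ev z k := by
  exact discExt_mul h.1 k.1 z

lemma ev_one {z : ℂ} (hz : z ∈ ball (0 : ℂ) 1) : ev z 1 = 1 := discExt_of_mem _ hz

lemma norm_ev_le (z : ℂ) (h : HInf) : ‖ev z h‖ ≤ ‖h‖ := by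
  exact norm_discExt_le h.1 z

lemma norm_le_of_ev (h : HInf) (C : ℝ) (hC : 0 ≤ C)
    (H : ∀ z ∈ ball (0 : ℂ) 1, ‖ev z h‖ ≤ C) : ‖h‖ ≤ C := by
  change ‖h.1‖ ≤ C
  rw [BoundedContinuousFunction.norm_le hC]
  rintro ⟨z, hz⟩
  have := H z hz
  rwa [ev_apply, discExt_of_mem _ hz] at this

lemma ext_ev {h k : HInf} (H : ∀ z ∈ ball (0 : ℂ) 1, ev z h = ev z k) : h = k := by
  rw [← sub_eq_zero, ← norm_le_zero_iff]
  apply norm_le_of_ev _ _ le_rfl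
  intro z hz
  rw [map_sub, H z hz]; simp

lemma differentiableOn (h : HInf) : DifferentiableOn ℂ (fun z => ev z h) (ball 0 1) := h.2

lemma exists_of {g : ℂ → ℂ} (hg : DifferentiableOn ℂ g (ball 0 1)) {C : ℝ}
    (hC : ∀ z ∈ ball (0 : ℂ) 1, ‖g z‖ ≤ C) :
    ∃ h : HInf, ∀ z ∈ ball (0 : ℂ) 1, ev z h = g z := by
  let h₀ : ball (0 : ℂ) 1 →ᵇ ℂ := BoundedContinuousFunction.ofNormedAddCommGroup
    (fun z => g z) (continuousOn_iff_continuous_domRestrict.1 hg.continuousOn) C (fun z => hC z z.2)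
  have e : ∀ z ∈ ball (0 : ℂ) 1, discExt h₀ z = g z := fun z hz => by
    rw [discExt_of_mem _ hz]; rfl
  exact ⟨⟨h₀, hg.congr e⟩, e⟩

lemma exists_coord : ∃ h : HInf, ∀ z ∈ ball (0 : ℂ) 1, ev z h = z :=
  exists_of (g := fun z => z) differentiableOn_id (C := 1) (fun z hz => by
    simpa using (mem_ball_zero_iff.1 hz).le)

/-- The coordinate function of the disc. -/
noncomputable def ι : HInf := exists_coord.choose

lemma ev_ι {z : ℂ} (hz : z ∈ ball (0 : ℂ) 1) : ev z ι = z := exists_coord.choose_spec z hz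

lemma zero_mem : (0 : ℂ) ∈ ball (0 : ℂ) 1 := mem_ball_self one_pos

lemma exists_L (h : HInf) : ∃ k : HInf, ∀ z ∈ ball (0 : ℂ) 1,
    ev z k = dslope (fun z => ev z h) 0 z :=
  exists_of ((Complex.differentiableOn_dslope (ball_mem_nhds _ one_pos)).2 h.differentiableOn)
    (fun _ hz => norm_dslope_le h.differentiableOn (fun z _ => norm_ev_le z h) hz)

/-- Division with remainder by the coordinate. -/
lemma exists_L' (h : HInf) : ∃ k : HInf, ‖k‖ ≤ 2 * ‖h‖ ∧ ∀ z ∈ ball (0 : ℂ) 1,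
    ev z h = ev 0 h + z * ev z k := by
  obtain ⟨k, hk⟩ := exists_L h
  refine ⟨k, ?_, fun z hz => ?_⟩
  · apply norm_le_of_ev _ _ (by positivity)
    intro z hz
    rw [hk z hz]
    refine (norm_dslope_le h.differentiableOn (fun z _ => norm_ev_le z h) hz).trans ?_
    simp
  · have := sub_smul_dslope (fun z => ev z h) 0 z
    rw [← hk z hz, smul_eq_mul, sub_zero] at this
    rw [this]; ring

lemma L_unique {k k' : HInf} {c c' : ℂ}
    (H : ∀ z ∈ ball (0 : ℂ) 1, c + z * ev z k = c' + z * ev z k') : k = k' := by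
  have hc : c = c' := by simpa using H 0 zero_mem
  have hne : ∀ z ∈ ball (0 : ℂ) 1, z ≠ 0 → ev z k = ev z k' := fun z hz h0 => by
    have := H z hz
    rw [hc] at this
    exact mul_left_cancel₀ h0 (add_left_cancel this)
  apply ext_ev
  intro z hz
  by_cases h0 : z = 0
  · subst h0
    have c1 : ContinuousAt (fun z => ev z k) 0 :=
      (k.differentiableOn.continuousOn).continuousAt (ball_mem_nhds _ one_pos)
    have c2 : ContinuousAt (fun z => ev z k') 0 :=
      (k'.differentiableOn.continuousOn).continuousAt (ball_mem_nhds _ one_pos)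
    have hev : (fun z => ev z k) =ᶠ[𝓝[≠] 0] fun z => ev z k' := by
      have : ball (0 : ℂ) 1 ∈ 𝓝[≠] (0 : ℂ) := mem_nhdsWithin_of_mem_nhds (ball_mem_nhds _ one_pos)
      filter_upwards [this, self_mem_nhdsWithin] with w hw hw0
      exact hne w hw hw0
    exact tendsto_nhds_unique ((c1.tendsto.mono_left nhdsWithin_le_nhds).congr' hev)
      (c2.tendsto.mono_left nhdsWithin_le_nhds)
  · exact hne z hz h0

/-- The backward shift `h ↦ (h - h 0) / z`. -/
noncomputable def L : HInf →L[ℂ] HInf :=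
  LinearMap.mkContinuous
    { toFun := fun h => (exists_L' h).choose
      map_add' := by
        intro a b
        apply L_unique (c := ev 0 (a + b)) (c' := ev 0 a + ev 0 b)
        intro z hz
        rw [← (exists_L' (a + b)).choose_spec.2 z hz, map_add, map_add, mul_add,
          (exists_L' a).choose_spec.2 z hz, (exists_L' b).choose_spec.2 z hz]
        ring
      map_smul' := by
        intro c a
        apply L_unique (c := ev 0 (c • a)) (c' := c * ev 0 a)
        intro z hz
        rw [← (exists_L' (c • a)).choose_spec.2 z hz, map_smul, RingHom.id_apply, map_smul,
          (exists_L' a).choose_spec.2 z hz]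
        simp only [smul_eq_mul]
        ring } 2 (fun h => (exists_L' h).choose_spec.1)

lemma ev_L (h : HInf) {z : ℂ} (hz : z ∈ ball (0 : ℂ) 1) :
    ev z h = ev 0 h + z * ev z (L h) := (exists_L' h).choose_spec.2 z hz

lemma L_ι_mul (h : HInf) : L (ι * h) = h := by
  apply L_unique (c := 0) (c' := 0)
  intro z hz
  have := ev_L (ι * h) hz
  rw [ev_mul, ev_mul, ev_ι hz, ev_ι zero_mem, zero_mul] at this
  rw [← this, zero_add]

lemma L_pow_ι (d : ℕ) (h : HInf) : (L ^ d) (ι ^ d * h) = h := by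
  induction d generalizing h with
  | zero => simp
  | succ d ih =>
    rw [pow_succ, pow_succ', mul_assoc]
    change (L ^ d) (L (ι * (ι ^ d * h))) = h
    rw [L_ι_mul, ih]

lemma ev_L_pow (d : ℕ) (h : HInf) {z : ℂ} (hz : z ∈ ball (0 : ℂ) 1) :
    ev z h = ∑ i ∈ Finset.range d, ev 0 ((L ^ i) h) * z ^ i + z ^ d * ev z ((L ^ d) h) := by
  induction d with
  | zero => simp
  | succ d ih =>
    rw [ih, Finset.sum_range_succ, ev_L ((L ^ d) h) hz, pow_succ' L d]
    change _ = _ + _ + z ^ (d + 1) * ev z (L ((L ^ d) h))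
    ring

lemma ev_pow {z : ℂ} (hz : z ∈ ball (0 : ℂ) 1) (h : HInf) (d : ℕ) :
    ev z (h ^ d) = ev z h ^ d := by
  induction d with
  | zero => simp [ev_one hz]
  | succ d ih => rw [pow_succ, ev_mul, ih, pow_succ]

/-- Evaluation is jointly holomorphic near `t = 0`, because it can be written through the resolvent
of the backward shift: `h t = ((1 - t L)⁻¹ h) 0`. -/
lemma eventually_differentiableAt_ev : ∃ δ > 0, δ < 1 ∧ ∀ t : ℂ, ‖t‖ < δ → ∀ h : HInf,
    DifferentiableAt ℂ (fun p : HInf × ℂ => ev p.2 p.1) (h, t) := by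
  have hunit : ∀ᶠ t : ℂ in 𝓝 0, IsUnit ((1 : HInf →L[ℂ] HInf) - t • L) := by
    have hc : ContinuousAt (fun t : ℂ => (1 : HInf →L[ℂ] HInf) - t • L) 0 := by fun_prop
    refine hc.eventually_mem (s := {T | IsUnit T}) ?_
    have e : (1 : HInf →L[ℂ] HInf) - (0 : ℂ) • L = 1 := by
      ext h; simp
    rw [e]
    exact Units.isOpen.mem_nhds isUnit_one
  obtain ⟨δ, hδ, hball⟩ := Metric.eventually_nhds_iff_ball.1 hunit
  refine ⟨min δ (1/2), by positivity, (min_le_right _ _).trans_lt (by norm_num), fun t ht h => ?_⟩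
  have hformula : ∀ t ∈ ball (0 : ℂ) (min δ (1/2)), ∀ h : HInf,
      ev t h = ev 0 (Ring.inverse ((1 : HInf →L[ℂ] HInf) - t • L) h) := by
    intro t ht h
    have ht1 : t ∈ ball (0 : ℂ) 1 :=
      ball_subset_ball ((min_le_right _ _).trans (by norm_num)) ht
    have hu := hball t (ball_subset_ball (min_le_left _ _) ht)
    set g := Ring.inverse ((1 : HInf →L[ℂ] HInf) - t • L) h with hg
    have e : h = g - t • L g := by
      have := congrArg (fun T : HInf →L[ℂ] HInf => T h) (Ring.mul_inverse_cancel _ hu)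
      simp only [mul_apply_eq_comp, ← hg] at this
      simpa using this.symm
    conv_lhs => rw [e]
    rw [map_sub, map_smul, ev_L g ht1, smul_eq_mul]; ring
  have ht' : t ∈ ball (0 : ℂ) (min δ (1/2)) := by simpa using ht
  have hu := hball t (ball_subset_ball (min_le_left _ _) ht')
  have hd : DifferentiableAt ℂ (fun p : HInf × ℂ =>
      ev 0 (Ring.inverse ((1 : HInf →L[ℂ] HInf) - p.2 • L) p.1)) (h, t) := by
    have h1 : DifferentiableAt ℂ (fun p : HInf × ℂ => (1 : HInf →L[ℂ] HInf) - p.2 • L) (h, t) := by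
      fun_prop
    have h2 : DifferentiableAt ℂ (fun p : HInf × ℂ =>
        Ring.inverse ((1 : HInf →L[ℂ] HInf) - p.2 • L)) (h, t) := by
      exact DifferentiableAt.comp (h, t) (g := Ring.inverse) (differentiableAt_inverse hu) h1
    have h3 := h2.clm_apply (differentiableAt_fst (𝕜 := ℂ) (p := (h, t)))
    exact (ev 0).differentiableAt.comp _ h3
  refine hd.congr_of_eventuallyEq ?_
  have : ∀ᶠ p : HInf × ℂ in 𝓝 (h, t), p.2 ∈ ball (0 : ℂ) (min δ (1/2)) :=
    continuousAt_snd.eventually_mem (isOpen_ball.mem_nhds ht')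
  filter_upwards [this] with p hp
  exact hformula p.2 hp p.1

end HInf

/-! ### Holomorphic germs and Weierstrass division -/

/-- `F` is holomorphic on a neighbourhood of the origin. -/
def Hol {E : Type*} [NormedAddCommGroup E] [NormedSpace ℂ E] (F : E → ℂ) : Prop :=
  ∀ᶠ x in 𝓝 (0 : E), DifferentiableAt ℂ F x

section

variable {E : Type*} [NormedAddCommGroup E] [NormedSpace ℂ E]

lemma Hol.differentiableAt {F : E → ℂ} (hF : Hol F) : DifferentiableAt ℂ F 0 :=
  Eventually.self_of_nhds (p := fun x => DifferentiableAt ℂ F x) hF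

lemma Hol.exists_ball {F : E → ℂ} (hF : Hol F) : ∃ r > 0, ∃ M, ∀ x ∈ ball (0 : E) r,
    DifferentiableAt ℂ F x ∧ ‖F x‖ ≤ M := by
  have hb : ∀ᶠ x in 𝓝 (0 : E), ‖F x‖ < ‖F 0‖ + 1 :=
    hF.differentiableAt.continuousAt.norm.eventually_lt_const (lt_add_one _)
  obtain ⟨r, hr, h⟩ := Metric.eventually_nhds_iff_ball.1 (Filter.Eventually.and hF hb)
  exact ⟨r, hr, ‖F 0‖ + 1, fun x hx => ⟨(h x hx).1, (h x hx).2.le⟩⟩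

/-- Slicing: a holomorphic germ on `E × ℂ` is a holomorphic germ on `E` with values in the
bounded holomorphic functions of the last variable, rescaled to the unit disc. -/
lemma Hol.curry {F : E × ℂ → ℂ} (hF : Hol F) : ∃ ρ₀ > 0, ∀ ρ : ℝ, 0 < ρ → ρ ≤ ρ₀ →
    ∃ G : E → HInf, (∀ᶠ x in 𝓝 0, DifferentiableAt ℂ G x) ∧
      ∀ᶠ x in 𝓝 0, ∀ t ∈ ball (0 : ℂ) 1, HInf.ev t (G x) = F (x, ρ * t) := by
  obtain ⟨r, hr, M, h⟩ := hF.exists_ball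
  refine ⟨r, hr, fun ρ hρ hρr => ?_⟩
  have hmem : ∀ x ∈ ball (0 : E) r, ∀ t ∈ ball (0 : ℂ) 1,
      (x, (ρ : ℂ) * t) ∈ ball (0 : E × ℂ) r := by
    intro x hx t ht
    rw [mem_ball_zero_iff] at *
    rw [Prod.norm_def, max_lt_iff]
    refine ⟨hx, ?_⟩
    rw [norm_mul, Complex.norm_real, Real.norm_of_nonneg hρ.le]
    calc ρ * ‖t‖ < ρ * 1 := by gcongr
      _ ≤ r := by linarith
  have hex : ∀ x : E, ∃ k : HInf, x ∈ ball (0 : E) r →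
      ∀ t ∈ ball (0 : ℂ) 1, HInf.ev t k = F (x, ρ * t) := by
    intro x
    by_cases hx : x ∈ ball (0 : E) r
    · obtain ⟨k, hk⟩ := HInf.exists_of (g := fun t => F (x, ρ * t)) (C := M) (by
        intro t ht
        apply DifferentiableAt.differentiableWithinAt
        exact ((h _ (hmem x hx t ht)).1).comp t (f := fun t : ℂ => (x, (ρ : ℂ) * t)) (by fun_prop))
        (fun t ht => (h _ (hmem x hx t ht)).2)
      exact ⟨k, fun _ => hk⟩
    · exact ⟨0, fun h => absurd h hx⟩
  choose G hG using hex
  refine ⟨G, ?_, ?_⟩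
  · filter_upwards [ball_mem_nhds (0 : E) hr] with x hx
    have hr' : 0 < r - ‖x‖ := by rw [mem_ball_zero_iff] at hx; linarith
    have hsub : ball x (r - ‖x‖) ⊆ ball 0 r := by
      apply ball_subset_ball'; rw [dist_zero_right]; linarith
    have hM0 : 0 ≤ M := (norm_nonneg _).trans (h 0 (mem_ball_self hr)).2
    apply differentiableAt_of_norming {e | ∃ z ∈ ball (0 : ℂ) 1, e = HInf.ev z}
      (r := r - ‖x‖) (M := M) _ _ hr' _ _
    · rintro _ ⟨z, _, rfl⟩ b; exact HInf.norm_ev_le z b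
    · intro b C hC hb
      exact HInf.norm_le_of_ev b C hC fun z hz => hb _ ⟨z, hz, rfl⟩
    · intro y hy
      apply HInf.norm_le_of_ev _ _ hM0
      intro z hz
      rw [hG y (hsub hy) z hz]
      exact (h _ (hmem y (hsub hy) z hz)).2
    · rintro _ ⟨z, hz, rfl⟩ y hy
      apply DifferentiableAt.differentiableWithinAt
      have : DifferentiableAt ℂ (fun y => F (y, ρ * z)) y :=
        ((h _ (hmem y (hsub hy) z hz)).1).comp y (f := fun y : E => (y, (ρ : ℂ) * z)) (by fun_prop)
      refine this.congr_of_eventuallyEq ?_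
      filter_upwards [isOpen_ball.mem_nhds (hsub hy)] with w hw
      exact hG w hw z hz
  · filter_upwards [ball_mem_nhds (0 : E) hr] with x hx
    exact hG x hx

/-- The converse of `Hol.curry`. -/
lemma hol_uncurry {G : E → HInf} (hG : ∀ᶠ x in 𝓝 0, DifferentiableAt ℂ G x) (c : ℂ) :
    Hol (fun p : E × ℂ => HInf.ev (c * p.2) (G p.1)) := by
  obtain ⟨δ, hδ, -, hd⟩ := HInf.eventually_differentiableAt_ev
  have h1 : ∀ᶠ p : E × ℂ in 𝓝 0, DifferentiableAt ℂ G p.1 :=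
    (continuous_fst.tendsto (0 : E × ℂ)).eventually hG
  have h2 : ∀ᶠ p : E × ℂ in 𝓝 0, ‖c * p.2‖ < δ := by
    have : ContinuousAt (fun p : E × ℂ => ‖c * p.2‖) 0 := by fun_prop
    exact this.eventually_lt_const (by simpa using hδ)
  filter_upwards [h1, h2] with p hp1 hp2
  have := hd (c * p.2) hp2 (G p.1)
  refine this.comp p (f := fun p : E × ℂ => (G p.1, c * p.2)) ?_
  refine DifferentiableAt.prodMk ?_ (by fun_prop)
  exact hp1.comp p differentiableAt_fst

lemma eventually_scaled {E : Type*} [NormedAddCommGroup E] (ρ : ℝ) : ∀ᶠ p : E × ℂ in 𝓝 0,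
    (ρ : ℂ)⁻¹ * p.2 ∈ ball (0 : ℂ) 1 := by
  have : ContinuousAt (fun p : E × ℂ => (ρ : ℂ)⁻¹ * p.2) 0 := by fun_prop
  exact this.eventually_mem (by simpa using ball_mem_nhds (0 : ℂ) one_pos)

lemma curry_eventually {E : Type*} [NormedAddCommGroup E] {F : E × ℂ → ℂ} {ρ : ℝ} (hρ : 0 < ρ) {G : E → HInf}
    (hG : ∀ᶠ x in 𝓝 0, ∀ t ∈ ball (0 : ℂ) 1, HInf.ev t (G x) = F (x, ρ * t)) :
    ∀ᶠ p : E × ℂ in 𝓝 0, HInf.ev ((ρ : ℂ)⁻¹ * p.2) (G p.1) = F p := by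
  have hρ' : (ρ : ℂ) ≠ 0 := by exact_mod_cast hρ.ne'
  filter_upwards [(continuous_fst.tendsto (0 : E × ℂ)).eventually hG, eventually_scaled ρ]
    with p h1 h2
  rw [h1 _ h2, mul_inv_cancel_left₀ hρ']

/-- Hadamard's lemma in the last variable. -/
lemma Hol.hadamard {F : E × ℂ → ℂ} (hF : Hol F) : ∃ Q : E × ℂ → ℂ, Hol Q ∧
    ∀ᶠ p : E × ℂ in 𝓝 0, F p = F (p.1, 0) + p.2 * Q p := by
  obtain ⟨ρ, hρ, h⟩ := hF.curry
  obtain ⟨G, hGd, hG⟩ := h ρ hρ le_rfl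
  have hLG : ∀ᶠ x in 𝓝 0, DifferentiableAt ℂ (fun x => (ρ : ℂ)⁻¹ • HInf.L (G x)) x := by
    filter_upwards [hGd] with x hx
    exact ((ρ : ℂ)⁻¹ • HInf.L).differentiableAt.comp x hx
  refine ⟨_, hol_uncurry hLG (ρ : ℂ)⁻¹, ?_⟩
  filter_upwards [(continuous_fst.tendsto (0 : E × ℂ)).eventually hG, eventually_scaled ρ,
    curry_eventually hρ hG] with p h1 h2 h3
  have h0 := h1 0 HInf.zero_mem
  rw [mul_zero] at h0
  rw [← h0, ← h3, HInf.ev_L _ h2, map_smul, smul_eq_mul]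
  ring

/-- Directional derivatives of a holomorphic germ are holomorphic. -/
lemma Hol.fderiv_apply {F : E → ℂ} (hF : Hol F) (v : E) : Hol (fun x => fderiv ℂ F x v) := by
  have hF' : Hol (fun p : E × ℂ => F (p.1 + p.2 • v)) := by
    have hc : ContinuousAt (fun p : E × ℂ => p.1 + p.2 • v) 0 := by fun_prop
    have := hc.tendsto.eventually (p := fun x => DifferentiableAt ℂ F x)
      (by simp only [Prod.fst_zero, Prod.snd_zero, zero_smul, add_zero]; exact hF)
    filter_upwards [this] with p hp
    exact hp.comp p (f := fun p : E × ℂ => p.1 + p.2 • v) (by fun_prop)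
  obtain ⟨ρ, hρ, h⟩ := hF'.curry
  obtain ⟨G, hGd, hG⟩ := h ρ hρ le_rfl
  have hρ' : (ρ : ℂ) ≠ 0 := by exact_mod_cast hρ.ne'
  have hd : Hol (fun x => (ρ : ℂ)⁻¹ * HInf.ev 0 (HInf.L (G x))) := by
    filter_upwards [hGd] with x hx
    exact (((HInf.ev 0).comp HInf.L).differentiableAt.comp x hx).const_mul _
  have heq : ∀ᶠ x in 𝓝 (0 : E), fderiv ℂ F x v = (ρ : ℂ)⁻¹ * HInf.ev 0 (HInf.L (G x)) := by
    filter_upwards [hF, hG] with x hx hGx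
    have h1 : HasDerivAt (fun t : ℂ => F (x + (ρ * t) • v)) ((ρ : ℂ) * fderiv ℂ F x v) 0 := by
      have h2 : HasFDerivAt F (fderiv ℂ F x) (x + ((ρ : ℂ) * 0) • v) := by
        simpa using hx.hasFDerivAt
      have h3 : HasDerivAt (fun t : ℂ => x + ((ρ : ℂ) * t) • v) ((ρ : ℂ) • v) 0 := by
        simpa using ((((hasDerivAt_id (0 : ℂ)).const_mul (ρ : ℂ))).smul_const v).const_add x
      have h4 := h2.comp_hasDerivAt 0 h3
      rw [map_smul, smul_eq_mul] at h4
      exact h4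
    have h4 : HasDerivAt (fun t : ℂ => HInf.ev 0 (G x) + t * HInf.ev t (HInf.L (G x)))
        (HInf.ev 0 (HInf.L (G x))) 0 := by
      have h5 : HasDerivAt (fun t => HInf.ev t (HInf.L (G x)))
          (deriv (fun t => HInf.ev t (HInf.L (G x))) 0) 0 :=
        ((HInf.differentiableOn _).differentiableAt (ball_mem_nhds _ one_pos)).hasDerivAt
      simpa using ((hasDerivAt_id (0 : ℂ)).mul h5).const_add (HInf.ev 0 (G x))
    have h6 : (fun t : ℂ => F (x + (ρ * t) • v)) =ᶠ[𝓝 0]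
        (fun t : ℂ => HInf.ev 0 (G x) + t * HInf.ev t (HInf.L (G x))) := by
      filter_upwards [ball_mem_nhds (0 : ℂ) one_pos] with t ht
      rw [← HInf.ev_L _ ht, hGx t ht]
    have h7 := h1.unique (h4.congr_of_eventuallyEq h6)
    rw [← h7, inv_mul_cancel_left₀ hρ']
  filter_upwards [hd, heq.eventually_nhds] with x h1 h2
  exact h1.congr_of_eventuallyEq h2

/-- Weierstrass division by a germ `f` that is regular in the last variable: the quotient is found
by inverting a holomorphic family of operators on `HInf`. -/
lemma Hol.weierstrass {f : E × ℂ → ℂ} (hf : Hol f) (hf0 : ¬ ∀ᶠ t in 𝓝 (0 : ℂ), f (0, t) = 0) :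
    ∃ d : ℕ, ∀ F : E × ℂ → ℂ, Hol F → ∃ (Q : E × ℂ → ℂ) (r : ℕ → E → ℂ), Hol Q ∧
      (∀ i, Hol (r i)) ∧ ∀ᶠ p : E × ℂ in 𝓝 0,
        F p = Q p * f p + ∑ i ∈ Finset.range d, r i p.1 * p.2 ^ i := by
  have han : AnalyticAt ℂ (fun t => f (0, t)) 0 := by
    rw [Complex.analyticAt_iff_eventually_differentiableAt]
    have : ContinuousAt (fun t : ℂ => ((0 : E), t)) 0 := by fun_prop
    filter_upwards [this.tendsto.eventually hf] with t ht
    exact ht.comp t (f := fun t : ℂ => ((0 : E), t)) (by fun_prop)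
  obtain ⟨d, g, hg, hg0, hfg⟩ := han.exists_eventuallyEq_pow_smul_nonzero_iff.2 hf0
  refine ⟨d, fun F hF => ?_⟩
  have hgd := hg.eventually_analyticAt
  have hgb : ∀ᶠ t in 𝓝 (0 : ℂ), ‖g t‖ < ‖g 0‖ + 1 :=
    hg.continuousAt.norm.eventually_lt_const (lt_add_one _)
  have hgl : ∀ᶠ t in 𝓝 (0 : ℂ), ‖g 0‖ / 2 < ‖g t‖ :=
    hg.continuousAt.norm.eventually_const_lt (half_lt_self (norm_pos_iff.2 hg0))
  obtain ⟨ρ₁, hρ₁, H⟩ := Metric.eventually_nhds_iff_ball.1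
    (hfg.and (hgd.and (hgb.and hgl)))
  obtain ⟨ρ₂, hρ₂, h₂⟩ := hf.curry
  obtain ⟨ρ₃, hρ₃, h₃⟩ := hF.curry
  set ρ := min ρ₁ (min ρ₂ ρ₃) with hρdef
  have hρ : 0 < ρ := by positivity
  have hρ' : (ρ : ℂ) ≠ 0 := by exact_mod_cast hρ.ne'
  obtain ⟨A, hAd, hA⟩ := h₂ ρ hρ ((min_le_right _ _).trans (min_le_left _ _))
  obtain ⟨B, hBd, hB⟩ := h₃ ρ hρ ((min_le_right _ _).trans (min_le_right _ _))
  have hmem : ∀ t ∈ ball (0 : ℂ) 1, (ρ : ℂ) * t ∈ ball (0 : ℂ) ρ₁ := by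
    intro t ht
    rw [mem_ball_zero_iff] at *
    rw [norm_mul, Complex.norm_real, Real.norm_of_nonneg hρ.le]
    calc ρ * ‖t‖ < ρ * 1 := by gcongr
      _ ≤ ρ₁ := by rw [mul_one]; exact min_le_left _ _
  have hdiff : ∀ t ∈ ball (0 : ℂ) 1, DifferentiableAt ℂ (fun t => g (ρ * t)) t := fun t ht =>
    ((H _ (hmem t ht)).2.1.differentiableAt).comp t (f := fun t : ℂ => (ρ : ℂ) * t) (by fun_prop)
  have hne : ∀ t ∈ ball (0 : ℂ) 1, g (ρ * t) ≠ 0 := fun t ht => by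
    have := (H _ (hmem t ht)).2.2.2
    have h0 : 0 < ‖g 0‖ := norm_pos_iff.2 hg0
    exact norm_pos_iff.1 (by linarith)
  obtain ⟨u, hu⟩ := HInf.exists_of (g := fun t => (ρ : ℂ) ^ d * g (ρ * t))
    (C := ρ ^ d * (‖g 0‖ + 1))
    (fun t ht => ((hdiff t ht).const_mul _).differentiableWithinAt) (fun t ht => by
      rw [norm_mul, norm_pow, Complex.norm_real, Real.norm_of_nonneg hρ.le]
      have := (H _ (hmem t ht)).2.2.1.le
      gcongr)
  obtain ⟨w, hw⟩ := HInf.exists_of (g := fun t => ((ρ : ℂ) ^ d * g (ρ * t))⁻¹)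
    (C := (ρ ^ d * (‖g 0‖ / 2))⁻¹)
    (fun t ht => (((hdiff t ht).const_mul _).inv
      (mul_ne_zero (pow_ne_zero _ hρ') (hne t ht))).differentiableWithinAt) (fun t ht => by
      rw [norm_inv, norm_mul, norm_pow, Complex.norm_real, Real.norm_of_nonneg hρ.le]
      have := (H _ (hmem t ht)).2.2.2.le
      have h0 : 0 < ‖g 0‖ := norm_pos_iff.2 hg0
      gcongr)
  have huw : u * w = 1 := by
    apply HInf.ext_ev
    intro t ht
    rw [HInf.ev_mul, hu t ht, hw t ht, mul_inv_cancel₀ (mul_ne_zero (pow_ne_zero _ hρ') (hne t ht)),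
      HInf.ev_one ht]
  have hA0 : A 0 = HInf.ι ^ d * u := by
    apply HInf.ext_ev
    intro t ht
    rw [hA.self_of_nhds t ht, HInf.ev_mul, HInf.ev_pow ht, hu t ht, HInf.ev_ι ht,
      (H _ (hmem t ht)).1, sub_zero, smul_eq_mul]
    ring
  -- `T x` sends `q` to the quotient part of `f (x, ·) q`; it is invertible for `x = 0`
  set T : E → (HInf →L[ℂ] HInf) := fun x => HInf.L ^ d * ContinuousLinearMap.mul ℂ HInf (A x)
    with hT
  have hTd : ∀ x, DifferentiableAt ℂ A x → DifferentiableAt ℂ T x := fun x hx => by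
    have h1 : DifferentiableAt ℂ (fun x => ContinuousLinearMap.mul ℂ HInf (A x)) x :=
      (ContinuousLinearMap.mul ℂ HInf).differentiableAt.comp x hx
    exact h1.const_mul _
  have hT0 : IsUnit (T 0) := by
    have h1 : T 0 = ContinuousLinearMap.mul ℂ HInf u := by
      ext1 q
      change (HInf.L ^ d) (A 0 * q) = u * q
      rw [hA0, mul_assoc, HInf.L_pow_ι]
    rw [h1]
    refine ⟨⟨ContinuousLinearMap.mul ℂ HInf u, ContinuousLinearMap.mul ℂ HInf w, ?_, ?_⟩, rfl⟩
    · ext1 q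
      change u * (w * q) = q
      rw [← mul_assoc, huw, one_mul]
    · ext1 q
      change w * (u * q) = q
      rw [← mul_assoc, mul_comm w, huw, one_mul]
  have hTu : ∀ᶠ x in 𝓝 0, IsUnit (T x) :=
    (hTd 0 hAd.self_of_nhds).continuousAt.eventually_mem (s := {S | IsUnit S})
      (Units.isOpen.mem_nhds hT0)
  set q : E → HInf := fun x => Ring.inverse (T x) ((HInf.L ^ d) (B x)) with hq
  have hqd : ∀ᶠ x in 𝓝 0, DifferentiableAt ℂ q x := by
    filter_upwards [hAd, hBd, hTu] with x h1 h2 h3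
    have h4 : DifferentiableAt ℂ (fun x => Ring.inverse (T x)) x :=
      DifferentiableAt.comp x (g := Ring.inverse) (differentiableAt_inverse h3) (hTd x h1)
    exact h4.clm_apply ((HInf.L ^ d).differentiableAt.comp x h2)
  have hrem : ∀ᶠ x in 𝓝 0, (HInf.L ^ d) (B x - A x * q x) = 0 := by
    filter_upwards [hTu] with x hx
    have := congrArg (fun S : HInf →L[ℂ] HInf => S ((HInf.L ^ d) (B x)))
      (Ring.mul_inverse_cancel _ hx)
    have h2 : (HInf.L ^ d) (A x * q x) = (HInf.L ^ d) (B x) := this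
    rw [map_sub, h2, sub_self]
  refine ⟨fun p => HInf.ev ((ρ : ℂ)⁻¹ * p.2) (q p.1),
    fun i x => (ρ : ℂ)⁻¹ ^ i * HInf.ev 0 ((HInf.L ^ i) (B x - A x * q x)),
    hol_uncurry hqd _, fun i => ?_, ?_⟩
  · filter_upwards [hAd, hBd, hqd] with x h1 h2 h3
    have h4 : DifferentiableAt ℂ (fun x => B x - A x * q x) x := h2.sub (h1.mul h3)
    exact (((HInf.ev 0).comp (HInf.L ^ i)).differentiableAt.comp x h4).const_mul _
  · filter_upwards [(continuous_fst.tendsto (0 : E × ℂ)).eventually hrem, eventually_scaled ρ,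
      curry_eventually hρ hA, curry_eventually hρ hB] with p h1 h2 h3 h4
    have h5 := HInf.ev_L_pow d (B p.1 - A p.1 * q p.1) h2
    rw [h1, map_zero, mul_zero, add_zero, map_sub, HInf.ev_mul, h3, h4] at h5
    rw [sub_eq_iff_eq_add] at h5
    rw [h5, add_comm, mul_comm (f p)]
    congr 1
    apply Finset.sum_congr rfl
    intro i _
    rw [mul_pow]; ring

end

/-! ### Formal arcs -/

section

variable {E : Type*} [NormedAddCommGroup E] [NormedSpace ℂ E]
variable {E' : Type*} [NormedAddCommGroup E'] [NormedSpace ℂ E']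

variable (E) in
/-- The ring of functions holomorphic near the origin. Functions with the same germ are not
identified. -/
def holRing : Subring (E → ℂ) where
  carrier := {F | Hol F}
  mul_mem' := by
    intro a b ha hb
    filter_upwards [ha, hb] with x h1 h2 using h1.mul h2
  add_mem' := by
    intro a b ha hb
    filter_upwards [ha, hb] with x h1 h2 using h1.add h2
  neg_mem' := by
    intro a ha
    filter_upwards [ha] with x h1 using h1.neg
  one_mem' := Eventually.of_forall fun _ => differentiableAt_const 1
  zero_mem' := Eventually.of_forall fun _ => differentiableAt_const 0

namespace holRing

lemma hol (F : holRing E) : Hol F.1 := F.2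

/-- Constant functions. -/
def cst : ℂ →+* holRing E where
  toFun c := ⟨fun _ => c, Eventually.of_forall fun _ => differentiableAt_const c⟩
  map_one' := rfl
  map_zero' := rfl
  map_mul' _ _ := rfl
  map_add' _ _ := rfl

/-- Continuous linear functionals as elements of the ring. -/
noncomputable def lin (l : E →L[ℂ] ℂ) : holRing E :=
  ⟨l, Eventually.of_forall fun _ => l.differentiableAt⟩

/-- Pullback along a map that is holomorphic near the origin and fixes it. -/
def pull (g : E → E') (hg : ∀ᶠ x in 𝓝 0, DifferentiableAt ℂ g x) (hg0 : g 0 = 0) :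
    holRing E' →+* holRing E where
  toFun F := ⟨fun x => F.1 (g x), by
    have hc : ContinuousAt g 0 := hg.self_of_nhds.continuousAt
    have h := hc.tendsto
    rw [hg0] at h
    filter_upwards [hg, h.eventually F.2] with x h1 h2
    exact h2.comp x h1⟩
  map_one' := rfl
  map_zero' := rfl
  map_mul' _ _ := rfl
  map_add' _ _ := rfl

lemma exists_inv (F : holRing E) (hF : F.1 0 ≠ 0) : ∃ G : holRing E, ∀ᶠ x in 𝓝 0,
    (F * G).1 x = 1 := by
  have hne : ∀ᶠ x in 𝓝 0, F.1 x ≠ 0 := (hol F).differentiableAt.continuousAt.eventually_ne hF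
  refine ⟨⟨fun x => (F.1 x)⁻¹, ?_⟩, ?_⟩
  · filter_upwards [F.2, hne] with x h1 h2 using h1.inv h2
  · filter_upwards [hne] with x h2
    exact mul_inv_cancel₀ h2

end holRing

/-- A formal arc at the origin: a homomorphism from germs at the origin to integral Hahn series
that is the identity on constants. Since the elements of `holRing E` are functions, the field
`germ` records that only germs matter. -/
structure IsArc (φ : holRing E →+* HOm) : Prop where
  const : ∀ c, φ (holRing.cst c) = HahnSeries.C c
  nonneg : ∀ F, 0 ≤ (φ F).orderTop
  germ : ∀ F : holRing E, (∀ᶠ x in 𝓝 0, F.1 x = 0) → φ F = 0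

lemma IsArc.congr {φ : holRing E →+* HOm} (hφ : IsArc φ) {F G : holRing E}
    (h : ∀ᶠ x in 𝓝 0, F.1 x = G.1 x) : φ F = φ G := by
  rw [← sub_eq_zero, ← map_sub]
  apply hφ.germ
  filter_upwards [h] with x hx
  exact sub_eq_zero.2 hx

/-- An arc starts at the origin: a germ is inverted as soon as it does not vanish there. -/
lemma IsArc.coeff_zero {φ : holRing E →+* HOm} (hφ : IsArc φ) (F : holRing E) :
    (φ F).coeff 0 = F.1 0 := by
  by_contra hne
  set c := (φ F).coeff 0 with hc
  have h0 : (F - holRing.cst c).1 0 ≠ 0 := fun h => hne (sub_eq_zero.1 h).symm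
  obtain ⟨G, hG⟩ := holRing.exists_inv _ h0
  have h1 : φ ((F - holRing.cst c) * G) = φ 1 := hφ.congr hG
  rw [map_mul, map_one] at h1
  have h2 := congrArg (fun x : HOm => x.coeff 0) h1
  simp only [HOm.coeff_zero_mul (hφ.nonneg _) (hφ.nonneg _)] at h2
  rw [map_sub, hφ.const, HahnSeries.coeff_sub, ← hc] at h2
  simp at h2

lemma IsArc.pos {φ : holRing E →+* HOm} (hφ : IsArc φ) {F : holRing E} (hF : F.1 0 = 0) :
    0 < (φ F).orderTop := by
  have := HOm.orderTop_sub_C_pos (hφ.nonneg F)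
  rwa [hφ.coeff_zero, hF, map_zero, sub_zero] at this

lemma IsArc.comp {φ : holRing E →+* HOm} (hφ : IsArc φ) {g : E → E'}
    (hg : ∀ᶠ x in 𝓝 0, DifferentiableAt ℂ g x) (hg0 : g 0 = 0) :
    IsArc (φ.comp (holRing.pull g hg hg0)) where
  const c := hφ.const c
  nonneg _ := hφ.nonneg _
  germ F hF := by
    apply hφ.germ
    have h := hg.self_of_nhds.continuousAt.tendsto
    rw [hg0] at h
    exact h.eventually hF

end

lemma holRing.analyticAt (F : holRing ℂ) : AnalyticAt ℂ F.1 0 :=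
  Complex.analyticAt_iff_eventually_differentiableAt.2 F.2

/-- Taylor expansion at the origin. -/
noncomputable def taylorHom : holRing ℂ →+* PowerSeries ℂ where
  toFun F := PowerSeries.mk fun n => iteratedDeriv n F.1 0 / n.factorial
  map_zero' := by
    ext n
    rw [PowerSeries.coeff_mk]
    change iteratedDeriv n (fun _ : ℂ => (0 : ℂ)) 0 / (n.factorial : ℂ) = 0
    simp
  map_one' := by
    ext n
    rw [PowerSeries.coeff_mk]
    change iteratedDeriv n (fun _ : ℂ => (1 : ℂ)) 0 / (n.factorial : ℂ) = _
    rw [iteratedDeriv_const, PowerSeries.coeff_one]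
    split_ifs with h <;> simp [h]
  map_add' F G := by
    ext n
    rw [PowerSeries.coeff_mk, map_add, PowerSeries.coeff_mk, PowerSeries.coeff_mk, ← add_div]
    congr 1
    exact iteratedDeriv_add (holRing.analyticAt F).contDiffAt (holRing.analyticAt G).contDiffAt
  map_mul' F G := by
    ext n
    rw [PowerSeries.coeff_mk, PowerSeries.coeff_mul]
    have : iteratedDeriv n (F * G).1 0 = _ :=
      iteratedDeriv_mul (holRing.analyticAt F).contDiffAt (holRing.analyticAt G).contDiffAt
    rw [this, Finset.Nat.sum_antidiagonal_eq_sum_range_succ_mk, Finset.sum_div]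
    apply Finset.sum_congr rfl
    intro i hi
    have hi' : i ≤ n := Nat.lt_succ_iff.1 (Finset.mem_range.1 hi)
    simp only [PowerSeries.coeff_mk]
    rw [Nat.cast_choose ℂ hi']
    have h1 : (n.factorial : ℂ) ≠ 0 := Nat.cast_ne_zero.2 n.factorial_ne_zero
    field_simp

lemma coeff_taylorHom (F : holRing ℂ) (n : ℕ) :
    PowerSeries.coeff n (taylorHom F) = iteratedDeriv n F.1 0 / n.factorial :=
  PowerSeries.coeff_mk n fun n => iteratedDeriv n F.1 0 / (n.factorial : ℂ)

lemma taylorHom_eq_zero {F : holRing ℂ} : taylorHom F = 0 ↔ ∀ᶠ t in 𝓝 0, F.1 t = 0 := by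
  have h1 : taylorHom F = 0 ↔ ∀ n, iteratedDeriv n F.1 0 = 0 := by
    rw [PowerSeries.ext_iff]
    refine forall_congr' fun n => ?_
    rw [coeff_taylorHom, map_zero, div_eq_zero_iff]
    simp [Nat.factorial_ne_zero]
  rw [h1, ← analyticOrderAt_eq_top]
  constructor
  · intro h
    apply ENat.eq_top_iff_forall_ge.2
    intro n
    exact (natCast_le_analyticOrderAt_iff_iteratedDeriv_eq_zero (holRing.analyticAt F)).2 fun i _ => h i
  · intro h n
    exact (natCast_le_analyticOrderAt_iff_iteratedDeriv_eq_zero (n := n + 1) (holRing.analyticAt F)).1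
      (by rw [h]; exact le_top) n (Nat.lt_succ_self n)

/-- Taylor expansion along the coordinate axis, as an arc. -/
noncomputable def taylorArc : holRing ℂ →+* HOm := (HahnSeries.ofPowerSeries ℚ ℂ).comp taylorHom

lemma taylorArc_eq_zero {F : holRing ℂ} : taylorArc F = 0 ↔ ∀ᶠ t in 𝓝 0, F.1 t = 0 := by
  rw [← taylorHom_eq_zero]
  exact map_eq_zero_iff _ HahnSeries.ofPowerSeries_injective

lemma isArc_taylorArc : IsArc taylorArc where
  const c := by
    have : taylorHom (holRing.cst c) = PowerSeries.C c := by
      ext n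
      rw [coeff_taylorHom]
      change iteratedDeriv n (fun _ : ℂ => c) 0 / (n.factorial : ℂ) = _
      rw [iteratedDeriv_const, PowerSeries.coeff_C]
      split_ifs with h <;> simp [h]
    change HahnSeries.ofPowerSeries ℚ ℂ (taylorHom _) = _
    rw [this, HahnSeries.ofPowerSeries_C]
  nonneg F := by
    rw [HahnSeries.le_orderTop_iff_forall]
    intro r hr
    have hr' : r < 0 := by exact_mod_cast hr
    change (HahnSeries.ofPowerSeries ℚ ℂ (taylorHom F)).coeff r = 0
    rw [HahnSeries.ofPowerSeries_apply]
    apply HahnSeries.embDomain_of_notMem_range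
    rintro ⟨n, hn⟩
    have : (n : ℚ) = r := hn
    have h0 : (0 : ℚ) ≤ n := n.cast_nonneg
    linarith
  germ F hF := taylorArc_eq_zero.2 hF

section

variable {E : Type*} [NormedAddCommGroup E] [NormedSpace ℂ E]

lemma line_differentiable (v : E) :
    ∀ᶠ t in 𝓝 (0 : ℂ), DifferentiableAt ℂ (fun t : ℂ => t • v) t :=
  Eventually.of_forall fun t => by fun_prop

/-- Restriction of a nonzero germ to a suitable line is nonzero. -/
lemma Hol.exists_line {F : E → ℂ} (hF : Hol F) (h : ¬ ∀ᶠ x in 𝓝 0, F x = 0) :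
    ∃ v : E, ¬ ∀ᶠ t in 𝓝 (0 : ℂ), F (t • v) = 0 := by
  obtain ⟨r, hr, M, hrM⟩ := hF.exists_ball
  rw [not_eventually] at h
  obtain ⟨v, hv, hvr⟩ := (h.and_eventually (ball_mem_nhds (0 : E) (half_pos hr))).exists
  refine ⟨v, fun h0 => hv ?_⟩
  have hd : DifferentiableOn ℂ (fun t : ℂ => F (t • v)) (ball 0 2) := by
    intro t ht
    apply DifferentiableAt.differentiableWithinAt
    have : t • v ∈ ball (0 : E) r := by
      rw [mem_ball_zero_iff] at *
      rw [dist_zero_right] at hvr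
      rw [norm_smul]
      nlinarith [norm_nonneg t, norm_nonneg v]
    exact (hrM _ this).1.comp t (f := fun t : ℂ => t • v) (by fun_prop)
  have := (hd.analyticOnNhd isOpen_ball).eqOn_zero_of_preconnected_of_eventuallyEq_zero
    (convex_ball _ _).isPreconnected (mem_ball_self two_pos) h0 (x := 1) (by simp)
  simpa using this

/-- A nonzero germ is nonzero along some arc. -/
lemma exists_arc_of_ne (h : holRing E) (hne : ¬ ∀ᶠ x in 𝓝 0, h.1 x = 0) :
    ∃ φ : holRing E →+* HOm, IsArc φ ∧ φ h ≠ 0 := by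
  obtain ⟨v, hv⟩ := (holRing.hol h).exists_line hne
  refine ⟨_, isArc_taylorArc.comp (line_differentiable v) (zero_smul _ _), ?_⟩
  exact fun h0 => hv (taylorArc_eq_zero.1 h0)

end

/-! ### Formal curve selection -/

/-- Homomorphisms to an algebraically closed field extend along integral ring homomorphisms. -/
lemma exists_extension {A R K : Type*} [CommRing A] [CommRing R] [IsDomain R] [Field K]
    [IsAlgClosed K] (g : A →+* R) (hg : g.IsIntegral) (φ : A →+* K)
    (hk : RingHom.ker g ≤ RingHom.ker φ) : ∃ ψ : R →+* K, ∀ a, ψ (g a) = φ a := by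
  let _ := g.toAlgebra
  have : Algebra.IsIntegral A R := ⟨hg⟩
  have : (RingHom.ker φ).IsPrime := RingHom.ker_isPrime φ
  obtain ⟨Q, hQ, hQc⟩ := Ideal.exists_ideal_over_prime_of_isIntegral_of_isDomain
    (S := R) (RingHom.ker φ) hk
  have : Q.LiesOver (RingHom.ker φ) := ⟨hQc.symm⟩
  let _ : Algebra (A ⧸ RingHom.ker φ) K := (RingHom.kerLift φ).toAlgebra
  have : Module.IsTorsionFree (A ⧸ RingHom.ker φ) K :=
    Module.isTorsionFree_iff_algebraMap_injective.2 (RingHom.kerLift_injective φ)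
  have : Module.IsTorsionFree (A ⧸ RingHom.ker φ) (R ⧸ Q) :=
    Module.isTorsionFree_iff_algebraMap_injective.2
      (FaithfulSMul.algebraMap_injective _ _)
  let L : (R ⧸ Q) →ₐ[A ⧸ RingHom.ker φ] K := IsAlgClosed.lift
  exact ⟨L.toRingHom.comp (Ideal.Quotient.mk Q), fun a => L.commutes (Ideal.Quotient.mk _ a)⟩

lemma isIntegral_of_powers {A R : Type*} [CommRing A] [CommRing R] (g : A →+* R) (t : R) (d : ℕ)
    (H : ∀ x, ∃ r : ℕ → A, x = ∑ k ∈ Finset.range d, g (r k) * t ^ k) : g.IsIntegral := by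
  apply RingHom.IsIntegral.of_finite
  let _ := g.toAlgebra
  change Module.Finite A R
  classical
  refine ⟨⟨(Finset.range d).image fun k => t ^ k, ?_⟩⟩
  rw [eq_top_iff]
  rintro x -
  obtain ⟨r, rfl⟩ := H x
  refine Submodule.sum_mem _ fun k hk => ?_
  change r k • t ^ k ∈ _
  exact Submodule.smul_mem _ _ (Submodule.subset_span
    (Finset.mem_coe.2 (Finset.mem_image_of_mem _ hk)))

/-- A nonzero element of an integral extension domain divides a nonzero element of the base. -/
lemma exists_multiple {A R : Type*} [CommRing A] [CommRing R] [IsDomain R] (g : A →+* R)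
    (hg : g.IsIntegral) {y : R} (hy : y ≠ 0) : ∃ b c, g b ≠ 0 ∧ g b = c * y := by
  let B := g.range
  have hi : IsIntegral B y := by
    obtain ⟨P, hP, hP0⟩ := hg y
    refine ⟨P.map g.rangeRestrict, hP.map _, ?_⟩
    rw [Polynomial.eval₂_map]
    exact hP0
  have := Ideal.comap_ne_bot_of_integral_mem (I := Ideal.span {y}) hy
    (Ideal.mem_span_singleton_self _) hi
  obtain ⟨⟨_, b, rfl⟩, hx, hx0⟩ := Submodule.exists_mem_ne_zero_of_ne_bot this
  obtain ⟨c, hc⟩ := Ideal.mem_span_singleton'.1 (Ideal.mem_comap.1 hx)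
  exact ⟨b, c, fun h0 => hx0 (Subtype.ext h0), hc.symm⟩

lemma mem_valuationSubring_of_integral {A R K : Type*} [CommRing A] [CommRing R] [Field K]
    (V : ValuationSubring K) (g : A →+* R) (hg : g.IsIntegral) (ψ : R →+* K)
    (H : ∀ a, ψ (g a) ∈ V) (x : R) : ψ x ∈ V := by
  obtain ⟨P, hP, hP0⟩ := hg x
  let χ : A →+* V := (ψ.comp g).codRestrict V H
  have hi : IsIntegral V (ψ x) := by
    refine ⟨P.map χ, hP.map _, ?_⟩
    rw [Polynomial.eval₂_map]
    have h1 : (algebraMap V K).comp χ = ψ.comp g := rfl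
    rw [h1, ← Polynomial.hom_eval₂, hP0, map_zero]
  obtain ⟨y, hy⟩ := IsIntegrallyClosed.isIntegral_iff.1 hi
  rw [← hy]
  exact y.2

section

variable {E : Type} [NormedAddCommGroup E] [NormedSpace ℂ E]
variable {E' : Type} [NormedAddCommGroup E'] [NormedSpace ℂ E']

variable (E) in
/-- The curve selection property for prime ideals of germs: there is an arc inside the zero set of
the ideal along which a given further function does not vanish. -/
def ArcProp : Prop := ∀ (p : Ideal (holRing E)), p.IsPrime →
    (∀ F : holRing E, (∀ᶠ x in 𝓝 0, F.1 x = 0) → F ∈ p) → ∀ h ∉ p,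
    ∃ φ : holRing E →+* HOm, IsArc φ ∧ (∀ F ∈ p, φ F = 0) ∧ φ h ≠ 0

/-- Invariance of the curve selection property under linear changes of coordinates. -/
lemma exists_arc_transport (e : E ≃L[ℂ] E') {p : Ideal (holRing E)} (hp : p.IsPrime)
    (hp0 : ∀ F : holRing E, (∀ᶠ x in 𝓝 0, F.1 x = 0) → F ∈ p) {h : holRing E} (hh : h ∉ p)
    (H : ∀ (q : Ideal (holRing E')), q.IsPrime →
      (∀ F : holRing E', (∀ᶠ x in 𝓝 0, F.1 x = 0) → F ∈ q) →
      (∀ F : holRing E', (∃ G ∈ p, ∀ x, F.1 x = G.1 (e.symm x)) → F ∈ q) → ∀ h ∉ q,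
      ∃ φ : holRing E' →+* HOm, IsArc φ ∧ (∀ F ∈ q, φ F = 0) ∧ φ h ≠ 0) :
    ∃ φ : holRing E →+* HOm, IsArc φ ∧ (∀ F ∈ p, φ F = 0) ∧ φ h ≠ 0 := by
  let a : holRing E' →+* holRing E := holRing.pull e
    (Eventually.of_forall fun x => e.differentiableAt) e.map_zero
  let b : holRing E →+* holRing E' := holRing.pull e.symm
    (Eventually.of_forall fun x => e.symm.differentiableAt) e.symm.map_zero
  have hab : ∀ F, a (b F) = F := fun F => by
    apply Subtype.ext
    funext x
    exact congrArg F.1 (e.symm_apply_apply x)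
  have := hp
  obtain ⟨φ, hφ, hφ0, hφh⟩ := H (p.comap a) inferInstance (fun F hF => hp0 _ (by
      have := e.continuous.tendsto 0
      rw [map_zero] at this
      exact this.eventually hF)) (fun F hF => by
      obtain ⟨G, hG, hFG⟩ := hF
      have : F = b G := Subtype.ext (funext hFG)
      rw [this, Ideal.mem_comap, hab]
      exact hG) (b h) (by rwa [Ideal.mem_comap, hab])
  exact ⟨φ.comp b, hφ.comp _ _, fun F hF => hφ0 _ (by rwa [Ideal.mem_comap, hab]), hφh⟩

lemma holRing.sum_apply {ι : Type*} (s : Finset ι) (F : ι → holRing E) (x : E) :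
    (∑ k ∈ s, F k).1 x = ∑ k ∈ s, (F k).1 x := by
  rw [AddSubmonoidClass.coe_finsetSum, Finset.sum_apply]

/-- Elements of a proper ideal vanish at the origin, since otherwise their germs are invertible. -/
lemma apply_zero_of_mem {p : Ideal (holRing E)} (hp : p.IsPrime)
    (hp0 : ∀ F : holRing E, (∀ᶠ x in 𝓝 0, F.1 x = 0) → F ∈ p) {F : holRing E} (hF : F ∈ p) :
    F.1 0 = 0 := by
  by_contra h0
  obtain ⟨G, hG⟩ := holRing.exists_inv F h0
  apply hp.ne_top
  rw [Ideal.eq_top_iff_one]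
  have h1 : 1 - F * G ∈ p := hp0 _ (by
    filter_upwards [hG] with x hx
    exact sub_eq_zero.2 hx.symm)
  have := p.add_mem h1 (p.mul_mem_right G hF)
  rwa [sub_add_cancel] at this

/-- The inductive step: if the ideal contains a function regular in the last variable then, by
Weierstrass division, the germs modulo the ideal are finite over the germs in fewer variables, and
an arc lifts along a finite extension because the field of Hahn series is algebraically closed. -/
lemma exists_arc_step (IH : ArcProp E) {p : Ideal (holRing (E × ℂ))} (hp : p.IsPrime)
    (hp0 : ∀ F : holRing (E × ℂ), (∀ᶠ x in 𝓝 0, F.1 x = 0) → F ∈ p) {h : holRing (E × ℂ)}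
    (hh : h ∉ p) {f : holRing (E × ℂ)} (hf : f ∈ p)
    (hf0 : ¬ ∀ᶠ t in 𝓝 (0 : ℂ), f.1 (0, t) = 0) :
    ∃ φ : holRing (E × ℂ) →+* HOm, IsArc φ ∧ (∀ F ∈ p, φ F = 0) ∧ φ h ≠ 0 := by
  have := hp
  let π := Ideal.Quotient.mk p
  let i : holRing E →+* holRing (E × ℂ) := holRing.pull Prod.fst
    (Eventually.of_forall fun x => differentiableAt_fst) rfl
  let g := π.comp i
  obtain ⟨d, hd⟩ := (holRing.hol f).weierstrass hf0
  let s : holRing (E × ℂ) := holRing.lin (ContinuousLinearMap.snd ℂ E ℂ)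
  have hgint : g.IsIntegral := by
    apply isIntegral_of_powers g (π s) d
    intro x
    obtain ⟨F, rfl⟩ := Ideal.Quotient.mk_surjective x
    obtain ⟨Q, r, hQ, hr, hFr⟩ := hd F.1 F.2
    have hmem : F - (⟨Q, hQ⟩ * f + ∑ k ∈ Finset.range d, i ⟨r k, hr k⟩ * s ^ k) ∈ p := by
      apply hp0
      filter_upwards [hFr] with x hx
      change F.1 x - (Q x * f.1 x + (∑ k ∈ Finset.range d, i ⟨r k, hr k⟩ * s ^ k).1 x) = 0
      rw [hx, holRing.sum_apply, sub_eq_zero]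
      rfl
    refine ⟨fun k => ⟨r k, hr k⟩, ?_⟩
    have hmem' : π (F - (⟨Q, hQ⟩ * f + ∑ k ∈ Finset.range d, i ⟨r k, hr k⟩ * s ^ k)) = 0 :=
      Ideal.Quotient.eq_zero_iff_mem.2 hmem
    have hπf : π f = 0 := Ideal.Quotient.eq_zero_iff_mem.2 hf
    rw [map_sub, sub_eq_zero, map_add, map_mul, hπf, mul_zero, zero_add, map_sum] at hmem'
    simp only [map_mul, map_pow] at hmem'
    exact hmem'
  have hπh : π h ≠ 0 := fun h0 => hh (Ideal.Quotient.eq_zero_iff_mem.1 h0)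
  -- a nonzero multiple of `h` comes from fewer variables
  obtain ⟨b, c, hb, hc⟩ := exists_multiple g hgint hπh
  obtain ⟨φ', hφ', hφ'0, hφ'b⟩ := IH (RingHom.ker g) (RingHom.ker_isPrime g) (fun F hF => by
    change π (i F) = 0
    apply Ideal.Quotient.eq_zero_iff_mem.2
    apply hp0
    exact (continuous_fst.tendsto (0 : E × ℂ)).eventually hF) b hb
  obtain ⟨ψ, hψ⟩ := exists_extension g hgint φ' hφ'0
  refine ⟨ψ.comp π, ⟨fun c => ?_, fun F => ?_, fun F hF => ?_⟩, fun F hF => ?_, fun h0 => ?_⟩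
  · rw [← hφ'.const c, ← hψ]; rfl
  · exact mem_valuationSubring_of_integral hahnInt g hgint ψ
      (fun a => by rw [hψ]; exact hφ'.nonneg a) (π F)
  · change ψ (π F) = 0
    rw [Ideal.Quotient.eq_zero_iff_mem.2 (hp0 F hF), map_zero]
  · change ψ (π F) = 0
    rw [Ideal.Quotient.eq_zero_iff_mem.2 hF, map_zero]
  · apply hφ'b
    rw [← hψ, hc, map_mul]
    have : ψ (π h) = 0 := h0
    rw [this, mul_zero]

/-- Curve selection for formal arcs, by induction on the number of variables. If the ideal is not
trivial, a suitable linear change of coordinates makes one of its elements regular in the last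
variable. -/
theorem arcProp (n : ℕ) : ∀ (E : Type) [NormedAddCommGroup E] [NormedSpace ℂ E]
    [FiniteDimensional ℂ E], Module.finrank ℂ E = n → ArcProp E := by
  induction n with
  | zero =>
    intro E _ _ _ hE p hp hp0 h hh
    have := Module.finrank_zero_iff.1 hE
    obtain ⟨φ, hφ, hφh⟩ := exists_arc_of_ne h fun h0 => hh (hp0 h h0)
    refine ⟨φ, hφ, fun F hF => ?_, hφh⟩
    exact hφ.germ _ (Eventually.of_forall fun x => by
      rw [Subsingleton.elim x 0, apply_zero_of_mem hp hp0 hF])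
  | succ n ih =>
    intro E _ _ _ hE p hp hp0 h hh
    by_cases hall : ∀ F ∈ p, ∀ᶠ x in 𝓝 0, F.1 x = 0
    · obtain ⟨φ, hφ, hφh⟩ := exists_arc_of_ne h fun h0 => hh (hp0 h h0)
      exact ⟨φ, hφ, fun F hF => hφ.germ F (hall F hF), hφh⟩
    push Not at hall
    obtain ⟨f, hf, hf0⟩ := hall
    obtain ⟨v, hv⟩ := (holRing.hol f).exists_line (not_eventually.2 hf0)
    have hv0 : v ≠ 0 := by
      rintro rfl
      simp only [smul_zero, apply_zero_of_mem hp hp0 hf] at hv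
      exact hv (Eventually.of_forall fun _ => trivial)
    obtain ⟨l, hl⟩ := SeparatingDual.exists_eq_one (R := ℂ) hv0
    let w : ℂ →L[ℂ] E := ContinuousLinearMap.toSpanSingleton ℂ v
    have hw : Function.RightInverse w l := fun c => by simp [w, hl]
    let e : E ≃L[ℂ] l.ker × ℂ := (ContinuousLinearEquiv.equivOfRightInverse l w hw).trans
      (ContinuousLinearEquiv.prodComm ℂ ℂ l.ker)
    have hes : ∀ t : ℂ, e.symm (0, t) = t • v := fun t => by
      rw [ContinuousLinearEquiv.symm_apply_eq]
      refine Prod.ext ?_ ?_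
      · change 0 = l.projKerOfRightInverse w hw (w t)
        rw [ContinuousLinearMap.projKerOfRightInverse_comp_inv]
      · change t = l (w t)
        rw [hw t]
    have hK : Module.finrank ℂ l.ker = n := by
      have := e.toLinearEquiv.finrank_eq
      rw [Module.finrank_prod, Module.finrank_self] at this
      omega
    apply exists_arc_transport e hp hp0 hh
    intro q hq hq0 hqp h' hh'
    refine exists_arc_step (ih l.ker hK) hq hq0 hh'
      (f := holRing.pull e.symm (Eventually.of_forall fun x => e.symm.differentiableAt)
        e.symm.map_zero f) (hqp _ ⟨f, hf, fun x => rfl⟩) ?_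
    intro h1
    apply hv
    filter_upwards [h1] with t ht
    rw [← hes]
    exact ht

end

/-! ### The chain rule along formal arcs -/

section

variable {E : Type*} [NormedAddCommGroup E] [NormedSpace ℂ E]
variable {ι : Type*} [Fintype ι]

/-- Hadamard's lemma: a holomorphic germ is a constant plus a combination of the coordinates
with holomorphic coefficients. -/
lemma Hol.exists_sum {F : E → ℂ} (hF : Hol F) (l : ι → E →L[ℂ] ℂ) (e : ι → E)
    (hle : ∀ x, ∑ i, l i x • e i = x) :
    ∃ G : ι → E → ℂ, (∀ i, Hol (G i)) ∧ ∀ᶠ x in 𝓝 0, F x = F 0 + ∑ i, l i x * G i x := by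
  classical
  have key : ∀ s : Finset ι, ∃ G : ι → E → ℂ, (∀ i, Hol (G i)) ∧
      ∀ᶠ x in 𝓝 0, F (∑ i ∈ s, l i x • e i) = F 0 + ∑ i ∈ s, l i x * G i x := by
    intro s
    induction s using Finset.induction_on with
    | empty => exact ⟨fun _ _ => 0, fun _ => Eventually.of_forall fun _ => differentiableAt_const 0,
        by simp⟩
    | insert a s ha ih =>
      obtain ⟨G, hG, hGF⟩ := ih
      have h1 : Hol (fun p : E × ℂ => F (p.2 • e a + ∑ i ∈ s, l i p.1 • e i)) := by
        have hc : ContinuousAt (fun p : E × ℂ => p.2 • e a + ∑ i ∈ s, l i p.1 • e i) 0 := by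
          fun_prop
        have := hc.tendsto.eventually (p := fun x => DifferentiableAt ℂ F x)
          (by simp only [Prod.fst_zero, Prod.snd_zero, zero_smul, map_zero, zero_add,
                Finset.sum_const_zero]; exact hF)
        filter_upwards [this] with p hp
        exact hp.comp p (f := fun p : E × ℂ => p.2 • e a + ∑ i ∈ s, l i p.1 • e i) (by fun_prop)
      obtain ⟨Q, hQ, hQF⟩ := h1.hadamard
      have hc : ContinuousAt (fun x : E => (x, l a x)) 0 := by fun_prop
      have hc' : Tendsto (fun x : E => (x, l a x)) (𝓝 0) (𝓝 0) := by
        have := hc.tendsto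
        rwa [map_zero] at this
      refine ⟨Function.update G a (fun x => Q (x, l a x)), fun i => ?_, ?_⟩
      · by_cases hi : i = a
        · subst hi
          rw [Function.update_self]
          filter_upwards [hc'.eventually hQ] with x hx
          exact hx.comp x (f := fun x : E => (x, l i x)) (by fun_prop)
        · rw [Function.update_of_ne hi]
          exact hG i
      · filter_upwards [hGF, hc'.eventually hQF] with x h2 h3
        rw [Finset.sum_insert ha, Finset.sum_insert ha, Function.update_self]
        simp only [zero_smul, zero_add] at h3
        have h4 : ∑ i ∈ s, l i x * Function.update G a (fun x => Q (x, l a x)) i x =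
            ∑ i ∈ s, l i x * G i x := Finset.sum_congr rfl fun i hi => by
          rw [Function.update_of_ne (ne_of_mem_of_not_mem hi ha)]
        rw [h3, h2, h4]
        ring
  obtain ⟨G, hG, h⟩ := key Finset.univ
  refine ⟨G, hG, ?_⟩
  filter_upwards [h] with x hx
  rwa [hle] at hx

/-- Directional derivative on the ring of germs. -/
noncomputable def holRing.der (v : E) (F : holRing E) : holRing E :=
  ⟨fun x => fderiv ℂ F.1 x v, (holRing.hol F).fderiv_apply v⟩

lemma HOm.le_orderTop_sum {ι : Type*} {c : WithTop ℚ} (s : Finset ι) (x : ι → HOm)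
    (h : ∀ i ∈ s, c ≤ (x i).orderTop) : c ≤ (∑ i ∈ s, x i).orderTop := by
  rw [HahnSeries.le_orderTop_iff_forall]
  intro r hr
  rw [HahnSeries.coeff_sum]
  exact Finset.sum_eq_zero fun i hi => HahnSeries.coeff_eq_zero_of_lt_orderTop
    (hr.trans_le (h i hi))

/-- A rational lower bound for finitely many positive orders. -/
lemma HOm.exists_pos_le (x : ι → HOm) (h : ∀ i, 0 < (x i).orderTop) :
    ∃ δ : ℚ, 0 < δ ∧ ∀ i, (δ : WithTop ℚ) ≤ (x i).orderTop := by
  classical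
  have key : ∀ s : Finset ι, ∃ δ : ℚ, 0 < δ ∧ ∀ i ∈ s, (δ : WithTop ℚ) ≤ (x i).orderTop := by
    intro s
    induction s using Finset.induction_on with
    | empty => exact ⟨1, one_pos, by simp⟩
    | insert a s ha ih =>
      obtain ⟨δ, hδ, hs⟩ := ih
      by_cases hx : x a = 0
      · refine ⟨δ, hδ, fun i hi => ?_⟩
        rcases Finset.mem_insert.1 hi with rfl | hi
        · rw [hx, HahnSeries.orderTop_zero]; exact le_top
        · exact hs i hi
      · have h1 := h a
        rw [← HahnSeries.order_eq_orderTop_of_ne_zero hx] at h1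
        have h2 : 0 < (x a).order := by exact_mod_cast h1
        refine ⟨min δ (x a).order, lt_min hδ h2, fun i hi => ?_⟩
        rcases Finset.mem_insert.1 hi with rfl | hi
        · rw [← HahnSeries.order_eq_orderTop_of_ne_zero hx]
          exact_mod_cast min_le_right _ _
        · refine le_trans ?_ (hs i hi)
          exact_mod_cast min_le_left _ _
  obtain ⟨δ, hδ, h⟩ := key Finset.univ
  exact ⟨δ, hδ, fun i => h i (Finset.mem_univ i)⟩

lemma HOm.D_C (c : ℂ) : HOm.D (HahnSeries.C c) = 0 := by
  ext q
  rw [HOm.D_coeff, HahnSeries.C_apply, HahnSeries.coeff_single]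
  split_ifs with h <;> simp [h]

/-- The failure of the chain rule along an arc; it is a derivation, shown to vanish in
`IsArc.chain_rule`. -/
noncomputable def arcDefect (φ : holRing E →+* HOm) (l : ι → E →L[ℂ] ℂ) (e : ι → E)
    (F : holRing E) : HOm :=
  HOm.D (φ F) - ∑ i, φ (holRing.der (e i) F) * HOm.D (φ (holRing.lin (l i)))

variable {φ : holRing E →+* HOm}

lemma arcDefect_congr (hφ : IsArc φ) (l : ι → E →L[ℂ] ℂ) (e : ι → E)
    {F G : holRing E} (h : ∀ᶠ x in 𝓝 0, F.1 x = G.1 x) :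
    arcDefect φ l e F = arcDefect φ l e G := by
  unfold arcDefect
  rw [hφ.congr h]
  congr 1
  refine Finset.sum_congr rfl fun i _ => ?_
  congr 1
  apply hφ.congr
  filter_upwards [h.eventually_nhds] with x hx
  exact congrArg (fun L : E →L[ℂ] ℂ => L (e i)) (Filter.EventuallyEq.fderiv_eq hx)

lemma arcDefect_add (hφ : IsArc φ) (l : ι → E →L[ℂ] ℂ) (e : ι → E) (F G : holRing E) :
    arcDefect φ l e (F + G) = arcDefect φ l e F + arcDefect φ l e G := by
  unfold arcDefect
  have h : ∀ i, φ (holRing.der (e i) (F + G)) =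
      φ (holRing.der (e i) F) + φ (holRing.der (e i) G) := fun i => by
    rw [← map_add]
    apply hφ.congr
    filter_upwards [F.2, G.2] with x h1 h2
    exact congrArg (fun L : E →L[ℂ] ℂ => L (e i)) (fderiv_add h1 h2)
  simp only [h, map_add, HOm.D_add, add_mul, Finset.sum_add_distrib]
  ring

lemma arcDefect_mul (hφ : IsArc φ) (l : ι → E →L[ℂ] ℂ) (e : ι → E) (F G : holRing E) :
    arcDefect φ l e (F * G) = φ F * arcDefect φ l e G + φ G * arcDefect φ l e F := by
  unfold arcDefect
  have h : ∀ i, φ (holRing.der (e i) (F * G)) =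
      φ F * φ (holRing.der (e i) G) + φ G * φ (holRing.der (e i) F) := fun i => by
    rw [← map_mul, ← map_mul, ← map_add]
    apply hφ.congr
    filter_upwards [F.2, G.2] with x h1 h2
    exact congrArg (fun L : E →L[ℂ] ℂ => L (e i)) (fderiv_mul h1 h2)
  simp only [h, map_mul, HOm.D_mul, add_mul, Finset.sum_add_distrib, mul_sub, Finset.mul_sum]
  simp only [mul_assoc]
  ring

lemma arcDefect_sum (hφ : IsArc φ) (l : ι → E →L[ℂ] ℂ) (e : ι → E)
    {κ : Type*} (s : Finset κ) (F : κ → holRing E) :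
    arcDefect φ l e (∑ k ∈ s, F k) = ∑ k ∈ s, arcDefect φ l e (F k) := by
  exact map_sum (AddMonoidHom.mk' (arcDefect φ l e) (arcDefect_add hφ l e)) F s

lemma arcDefect_cst (hφ : IsArc φ) (l : ι → E →L[ℂ] ℂ) (e : ι → E) (c : ℂ) :
    arcDefect φ l e (holRing.cst c) = 0 := by
  unfold arcDefect
  rw [hφ.const, HOm.D_C, zero_sub, neg_eq_zero]
  refine Finset.sum_eq_zero fun i _ => ?_
  rw [hφ.germ (holRing.der (e i) (holRing.cst c)), zero_mul]
  refine Eventually.of_forall fun x => ?_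
  change fderiv ℂ (fun _ => c) x (e i) = 0
  simp

lemma arcDefect_lin (l : ι → E →L[ℂ] ℂ) (e : ι → E) [DecidableEq ι]
    (hd : ∀ i j, l i (e j) = if i = j then 1 else 0) (i : ι) :
    arcDefect φ l e (holRing.lin (l i)) = 0 := by
  unfold arcDefect
  have h : ∀ j, φ (holRing.der (e j) (holRing.lin (l i))) = if i = j then 1 else 0 := fun j => by
    have : holRing.der (e j) (holRing.lin (l i)) = holRing.cst (if i = j then 1 else 0) := by
      apply Subtype.ext
      funext x
      change fderiv ℂ (l i) x (e j) = if i = j then 1 else 0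
      rw [ContinuousLinearMap.fderiv, hd]
    rw [this]
    split_ifs <;> simp
  simp [h]

/-- The chain rule along a formal arc. The defect is a derivation that kills constants and
coordinates, so by Hadamard's lemma the defect of a germ is a combination of the coordinates along
the arc with defects as coefficients. Iterating, its order exceeds every bound. -/
theorem IsArc.chain_rule (hφ : IsArc φ) (l : ι → E →L[ℂ] ℂ) (e : ι → E) [DecidableEq ι]
    (hle : ∀ x, ∑ i, l i x • e i = x)
    (hd : ∀ i j, l i (e j) = if i = j then 1 else 0) (F : holRing E) :
    HOm.D (φ F) = ∑ i, φ (holRing.der (e i) F) * HOm.D (φ (holRing.lin (l i))) := by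
  rw [← sub_eq_zero]
  change arcDefect φ l e F = 0
  obtain ⟨δ, hδ, hδl⟩ := HOm.exists_pos_le (fun i => φ (holRing.lin (l i)))
    (fun i => hφ.pos (map_zero (l i)))
  have key : ∀ k : ℕ, ∀ F, ((k * δ : ℚ) : WithTop ℚ) ≤ (arcDefect φ l e F).orderTop := by
    intro k
    induction k with
    | zero =>
      intro F
      simp only [Nat.cast_zero, zero_mul]
      change 0 ≤ _
      unfold arcDefect
      have h1 : 0 ≤ (HOm.D (φ F)).orderTop := (HOm.D_orderTop_pos (hφ.nonneg F)).le
      have h2 : 0 ≤ (∑ i, φ (holRing.der (e i) F) * HOm.D (φ (holRing.lin (l i)))).orderTop :=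
        HOm.le_orderTop_sum _ _ fun i _ => HOm.mul_nonneg (hφ.nonneg _)
          (HOm.D_orderTop_pos (hφ.nonneg _)).le
      exact hahnInt.sub_mem h1 h2
    | succ k ih =>
      intro F
      obtain ⟨G, hG, hFG⟩ := (holRing.hol F).exists_sum l e hle
      have h1 : arcDefect φ l e F = ∑ i, φ (holRing.lin (l i)) * arcDefect φ l e ⟨G i, hG i⟩ := by
        rw [arcDefect_congr hφ l e
          (G := holRing.cst (F.1 0) + ∑ i, holRing.lin (l i) * ⟨G i, hG i⟩),
          arcDefect_add hφ, arcDefect_cst hφ, zero_add, arcDefect_sum hφ]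
        · refine Finset.sum_congr rfl fun i _ => ?_
          rw [arcDefect_mul hφ, arcDefect_lin l e hd, mul_zero, add_zero]
        · filter_upwards [hFG] with x hx
          rw [hx]
          change _ = F.1 0 + (∑ i, holRing.lin (l i) * ⟨G i, hG i⟩ : holRing E).1 x
          rw [AddSubmonoidClass.coe_finsetSum, Finset.sum_apply]
          rfl
      rw [h1]
      refine HOm.le_orderTop_sum _ _ fun i _ => ?_
      rw [HahnSeries.orderTop_mul]
      have h2 : (((k + 1 : ℕ) * δ : ℚ) : WithTop ℚ) =
          (δ : WithTop ℚ) + ((k * δ : ℚ) : WithTop ℚ) := by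
        rw [← WithTop.coe_add]
        congr 1
        push_cast
        ring
      rw [h2]
      exact add_le_add (hδl i) (ih _)
  ext q
  obtain ⟨k, hk⟩ := exists_nat_gt (q / δ)
  rw [div_lt_iff₀ hδ] at hk
  exact HahnSeries.coeff_eq_zero_of_lt_orderTop
    (lt_of_lt_of_le (by exact_mod_cast hk) (key k F))

end

/-! ### The regularity theorem -/

/-- Linear dependence over the reals of `z` and `i • grad log f z` expresses the derivative of `f`
at `z` through the Hermitian form. -/
lemma exists_real_of_not_linearIndependent {n : ℕ} {f : EuclideanSpace ℂ (Fin n) → ℂ}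
    {z : EuclideanSpace ℂ (Fin n)} (hz : z ≠ 0) (hfz : f z ≠ 0)
    (h : ¬ LinearIndependent ℝ
      ![z, Complex.I • (((starRingEnd ℂ) (f z))⁻¹ • gradient f z)]) :
    ∃ a : ℝ, ∀ j, fderiv ℂ f z (EuclideanSpace.single j 1) =
      Complex.I * a * f z * (starRingEnd ℂ) (z j) := by
  rw [LinearIndependent.pair_iff' hz] at h
  push Not at h
  obtain ⟨a, ha⟩ := h
  refine ⟨a, fun j => ?_⟩
  have hc : (starRingEnd ℂ) (f z) ≠ 0 := (map_ne_zero _).2 hfz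
  have hg : gradient f z = ((starRingEnd ℂ) (f z) * (-Complex.I) * a) • z := by
    have h1 : (a : ℂ) • z = Complex.I • (((starRingEnd ℂ) (f z))⁻¹ • gradient f z) := by
      rw [← ha]; rfl
    rw [mul_smul, h1, smul_smul, smul_smul]
    have : (starRingEnd ℂ) (f z) * -Complex.I * Complex.I * ((starRingEnd ℂ) (f z))⁻¹ = 1 := by
      rw [mul_assoc _ (-Complex.I), neg_mul, Complex.I_mul_I, neg_neg, mul_one, mul_inv_cancel₀ hc]
    rw [this, one_smul]
  have h2 : fderiv ℂ f z (EuclideanSpace.single j 1) =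
      inner ℂ (gradient f z) (EuclideanSpace.single j 1) := by
    rw [gradient, InnerProductSpace.toDual_symm_apply]
  rw [h2, hg, inner_smul_left, EuclideanSpace.inner_single_right]
  simp only [map_mul, map_neg, Complex.conj_conj, Complex.conj_I, Complex.conj_ofReal]
  ring

/-- There is no arc of bad points. Here `T * U` is the arc, `W` stands for the conjugate of `U`, and
`hrel` is the relation satisfied at bad points. By the chain rule it gives
`ε * lP = η * ∑ W (D U + lT * U)` for the logarithmic derivatives `lP` and `lT` of `F` and `T`; in the
constant terms, `ε₀` times a positive number equals `i η₀` times a positive number, so that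
`ε₀ = η₀ = 0`. -/
lemma arc_contradiction {n : ℕ} {Ψ : holRing (EuclideanSpace ℂ (Fin n)) →+* HOm} (hΨ : IsArc Ψ)
    (F : holRing (EuclideanSpace ℂ (Fin n))) (hF0 : F.1 0 = 0) (hF : Ψ F ≠ 0)
    (T : HOm) (U W : Fin n → HOm) (ε η : HOm) (hT : T ≠ 0) (hTpos : 0 < T.orderTop)
    (hU : ∀ j, 0 ≤ (U j).orderTop) (hW : ∀ j, 0 ≤ (W j).orderTop) (hε : 0 ≤ ε.orderTop)
    (hη : 0 ≤ η.orderTop)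
    (hx : ∀ j, Ψ (holRing.lin (EuclideanSpace.proj j)) = T * U j)
    (hrel : ∀ j, ε * T * Ψ (holRing.der (EuclideanSpace.single j 1) F) = η * Ψ F * W j)
    (ε₀ η₀ : ℝ) (u : Fin n → ℂ) (hu : u ≠ 0) (hεη : ε₀ ^ 2 + η₀ ^ 2 = 1)
    (hε₀ : ε.coeff 0 = ε₀) (hη₀ : η.coeff 0 = Complex.I * η₀) (hU₀ : ∀ j, (U j).coeff 0 = u j)
    (hW₀ : ∀ j, (W j).coeff 0 = (starRingEnd ℂ) (u j)) : False := by
  obtain ⟨lT, hlT, hlT0, hlTc⟩ := HOm.logD hT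
  obtain ⟨lP, hlP, hlP0, hlPc⟩ := HOm.logD hF
  have hchain := hΨ.chain_rule (fun j => EuclideanSpace.proj j)
    (fun j => EuclideanSpace.single j (1 : ℂ))
    (fun x => by
      ext k
      simp [Pi.single_apply])
    (fun i j => by simp) F
  have h1 : ε * lP = η * ∑ j, W j * (HOm.D (U j) + lT * U j) := by
    apply mul_right_cancel₀ hF
    rw [mul_assoc, ← hlP, hchain, Finset.mul_sum, Finset.mul_sum, Finset.sum_mul]
    refine Finset.sum_congr rfl fun j _ => ?_
    rw [hx, HOm.D_mul, hlT]
    linear_combination (HOm.D (U j) + lT * U j) * hrel j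
  have hD : ∀ j, 0 ≤ (HOm.D (U j)).orderTop := fun j => (HOm.D_orderTop_pos (hU j)).le
  have hterm : ∀ j, 0 ≤ (HOm.D (U j) + lT * U j).orderTop := fun j =>
    HOm.add_nonneg (hD j) (HOm.mul_nonneg hlT0 (hU j))
  have h2 : (ε * lP).coeff 0 = (η * ∑ j, W j * (HOm.D (U j) + lT * U j)).coeff 0 := by rw [h1]
  rw [HOm.coeff_zero_mul hε hlP0, HOm.coeff_zero_mul hη
    (HOm.le_orderTop_sum _ _ fun j _ => HOm.mul_nonneg (hW j) (hterm j)),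
    HahnSeries.coeff_sum, hε₀, hη₀, hlPc] at h2
  have h3 : ∀ j, (W j * (HOm.D (U j) + lT * U j)).coeff 0 =
      ((T.order * ‖u j‖ ^ 2 : ℝ) : ℂ) := fun j => by
    rw [HOm.coeff_zero_mul (hW j) (hterm j), HahnSeries.coeff_add,
      HOm.coeff_zero_mul hlT0 (hU j), hW₀, hU₀, hlTc, HOm.D_coeff]
    have := Complex.conj_mul' (u j)
    push_cast
    rw [← this]
    ring
  simp only [h3] at h2
  rw [← Complex.ofReal_sum, ← Finset.mul_sum] at h2
  have hα : (0 : ℝ) < (Ψ F).order := by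
    have := hΨ.pos hF0
    rw [← HahnSeries.order_eq_orderTop_of_ne_zero hF] at this
    exact_mod_cast this
  have hβ : (0 : ℝ) < T.order := by
    rw [← HahnSeries.order_eq_orderTop_of_ne_zero hT] at hTpos
    exact_mod_cast hTpos
  have hσ : 0 < ∑ j, ‖u j‖ ^ 2 := by
    obtain ⟨j, hj⟩ := Function.ne_iff.1 hu
    exact Finset.sum_pos' (fun _ _ => by positivity)
      ⟨j, Finset.mem_univ j, pow_pos (norm_pos_iff.2 hj) 2⟩
  have hre := congrArg Complex.re h2
  have him := congrArg Complex.im h2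
  have hcast : (((Ψ F).order : ℚ) : ℂ) = (((Ψ F).order : ℝ) : ℂ) := by push_cast; rfl
  rw [hcast] at hre him
  simp only [Complex.mul_re, Complex.mul_im, Complex.ofReal_re, Complex.ofReal_im, Complex.I_re,
    Complex.I_im, mul_zero, zero_mul, sub_zero, one_mul, zero_add, add_zero,
    sub_self] at hre him
  have e0 : ε₀ = 0 := by
    rcases mul_eq_zero.1 hre with h | h
    · exact h
    · exact absurd h hα.ne'
  have n0 : η₀ = 0 := by
    rcases mul_eq_zero.1 him.symm with h | h
    · exact h
    · exact absurd h (mul_pos hβ hσ).ne'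
  rw [e0, n0] at hεη
  norm_num at hεη

/-- The ideal of functions that vanish at `x k` for almost all `k` with respect to an ultrafilter. -/
def vanishingIdeal {E : Type*} [NormedAddCommGroup E] [NormedSpace ℂ E] {κ : Type*}
    (𝒰 : Ultrafilter κ) (x : κ → E) : Ideal (holRing E) where
  carrier := {F | ∀ᶠ k in 𝒰, F.1 (x k) = 0}
  add_mem' := by
    intro a b ha hb
    filter_upwards [ha, hb] with k h1 h2
    change a.1 (x k) + b.1 (x k) = 0
    rw [h1, h2, add_zero]
  zero_mem' := Eventually.of_forall fun _ => rfl
  smul_mem' := by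
    intro c a ha
    filter_upwards [ha] with k h1
    change c.1 (x k) * a.1 (x k) = 0
    rw [h1, mul_zero]

lemma vanishingIdeal_isPrime {E : Type*} [NormedAddCommGroup E] [NormedSpace ℂ E] {κ : Type*}
    (𝒰 : Ultrafilter κ) (x : κ → E) : (vanishingIdeal 𝒰 x).IsPrime := by
  refine Ideal.isPrime_iff.2 ⟨?_, ?_⟩
  · rw [Ideal.ne_top_iff_one]
    intro h
    obtain ⟨k, hk⟩ := Eventually.exists (f := (𝒰 : Filter κ)) h
    exact one_ne_zero hk
  · intro a b hab
    refine Ultrafilter.eventually_or.1 (Eventually.mono hab fun k hk => ?_)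
    exact mul_eq_zero.1 hk

/-- The parameter space for arcs of bad points, with coordinates standing for `τ`, `u`, `conj u`,
`ε` and `i s` in `false_of_bad_points`, recentred at their limits. -/
abbrev ArcSpace (n : ℕ) : Type := ℂ × (Fin n → ℂ) × (Fin n → ℂ) × ℂ × ℂ

/-- A family of bad points `τ u`, rescaled so that all the data converge along an ultrafilter, gives
rise to an arc of bad points, which does not exist. The conjugates of the coordinates `u` are
treated as independent variables, which makes the relation `hrel` holomorphic. -/
lemma false_of_bad_points {n : ℕ} {κ : Type*} (𝒰 : Ultrafilter κ)
    {f : EuclideanSpace ℂ (Fin n) → ℂ} (hf : Hol f) (hf0 : f 0 = 0)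
    (τ : κ → ℂ) (u : κ → Fin n → ℂ) (ε s : κ → ℝ) (u₀ : Fin n → ℂ) (ε₀ s₀ : ℝ)
    (hτ : Tendsto τ 𝒰 (𝓝 0)) (hu : Tendsto u 𝒰 (𝓝 u₀)) (hε : Tendsto ε 𝒰 (𝓝 ε₀))
    (hs : Tendsto s 𝒰 (𝓝 s₀)) (hu₀ : u₀ ≠ 0) (hεs : ε₀ ^ 2 + s₀ ^ 2 = 1)
    (hτ0 : ∀ᶠ k in 𝒰, τ k ≠ 0) (hne : ∀ᶠ k in 𝒰, f (τ k • WithLp.toLp 2 (u k)) ≠ 0)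
    (hrel : ∀ᶠ k in 𝒰, ∀ j, ε k * τ k *
      fderiv ℂ f (τ k • WithLp.toLp 2 (u k)) (EuclideanSpace.single j 1) =
      Complex.I * s k * f (τ k • WithLp.toLp 2 (u k)) * (starRingEnd ℂ) (u k j)) : False := by
  let c₀ : Fin n → ℂ := fun j => (starRingEnd ℂ) (u₀ j)
  let x : κ → ArcSpace n := fun k => (τ k, u k - u₀, (fun j => (starRingEnd ℂ) (u k j)) - c₀,
    (ε k : ℂ) - ε₀, Complex.I * s k - Complex.I * s₀)
  have hx : Tendsto x 𝒰 (𝓝 0) := by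
    have h2 : Tendsto (fun k => u k - u₀) 𝒰 (𝓝 0) := by simpa using hu.sub_const u₀
    have h3 : Tendsto (fun k => (fun j => (starRingEnd ℂ) (u k j)) - c₀) 𝒰 (𝓝 0) := by
      have : Continuous fun v : Fin n → ℂ => (fun j => (starRingEnd ℂ) (v j)) - c₀ := by fun_prop
      have h := (this.tendsto u₀).comp hu
      have e : (fun j => (starRingEnd ℂ) (u₀ j)) - c₀ = 0 := sub_self _
      rwa [e] at h
    have h4 : Tendsto (fun k => (ε k : ℂ) - ε₀) 𝒰 (𝓝 0) := by
      simpa using ((Complex.continuous_ofReal.tendsto ε₀).comp hε).sub_const (ε₀ : ℂ)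
    have h5 : Tendsto (fun k => Complex.I * s k - Complex.I * s₀) 𝒰 (𝓝 0) := by
      simpa using (((Complex.continuous_ofReal.tendsto s₀).comp hs).const_mul
        Complex.I).sub_const (Complex.I * s₀)
    exact hτ.prodMk_nhds (h2.prodMk_nhds (h3.prodMk_nhds (h4.prodMk_nhds h5)))
  let tF : holRing (ArcSpace n) := ⟨fun y => y.1, Eventually.of_forall fun y => by fun_prop⟩
  let uF : Fin n → holRing (ArcSpace n) := fun j =>
    ⟨fun y => y.2.1 j + u₀ j, Eventually.of_forall fun y => by fun_prop⟩
  let wF : Fin n → holRing (ArcSpace n) := fun j =>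
    ⟨fun y => y.2.2.1 j + c₀ j, Eventually.of_forall fun y => by fun_prop⟩
  let eF : holRing (ArcSpace n) := ⟨fun y => y.2.2.2.1 + ε₀, Eventually.of_forall fun y => by fun_prop⟩
  let nF : holRing (ArcSpace n) :=
    ⟨fun y => y.2.2.2.2 + Complex.I * s₀, Eventually.of_forall fun y => by fun_prop⟩
  let fV : holRing (EuclideanSpace ℂ (Fin n)) := ⟨f, hf⟩
  let m : ArcSpace n → EuclideanSpace ℂ (Fin n) := fun y => y.1 • WithLp.toLp 2 (y.2.1 + u₀)
  have hm : ∀ᶠ y in 𝓝 0, DifferentiableAt ℂ m y := Eventually.of_forall fun y => by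
    have h : DifferentiableAt ℂ
        (fun y : ArcSpace n => (EuclideanSpace.equiv (Fin n) ℂ).symm (y.2.1 + u₀)) y := by
      fun_prop
    exact DifferentiableAt.fun_smul differentiableAt_fst h
  have hm0 : m 0 = 0 := zero_smul _ _
  have hmx : ∀ k, m (x k) = τ k • WithLp.toLp 2 (u k) := fun k => by
    change τ k • WithLp.toLp 2 (u k - u₀ + u₀) = _
    rw [sub_add_cancel]
  let P := holRing.pull m hm hm0
  let p := vanishingIdeal 𝒰 x
  have hp0 : ∀ F : holRing (ArcSpace n), (∀ᶠ y in 𝓝 0, F.1 y = 0) → F ∈ p := fun F hF => hx.eventually hF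
  have hh : tF * P fV ∉ p := by
    intro h
    obtain ⟨k, ⟨h1, h2⟩, h3⟩ := ((hτ0.and hne).and (show ∀ᶠ k in 𝒰, (tF * P fV).1 (x k) = 0
      from h)).exists
    have h4 : τ k * f (m (x k)) = 0 := h3
    rw [hmx] at h4
    exact (mul_ne_zero h1 h2) h4
  obtain ⟨φ, hφ, hφp, hφh⟩ := arcProp _ (ArcSpace n) rfl p (vanishingIdeal_isPrime 𝒰 x) hp0 _ hh
  rw [map_mul] at hφh
  have hrel' : ∀ j, eF * tF * P (holRing.der (EuclideanSpace.single j 1) fV) -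
      nF * P fV * wF j ∈ p := fun j => by
    change ∀ᶠ k in (𝒰 : Filter κ), _
    filter_upwards [hrel] with k hk
    change ((ε k : ℂ) - ε₀ + ε₀) * τ k * fderiv ℂ f (m (x k)) (EuclideanSpace.single j 1) -
      (Complex.I * s k - Complex.I * s₀ + Complex.I * s₀) * f (m (x k)) *
        ((starRingEnd ℂ) (u k j) - c₀ j + c₀ j) = 0
    rw [hmx, sub_add_cancel, sub_add_cancel, sub_add_cancel, hk j, sub_self]
  refine arc_contradiction (hφ.comp hm hm0) fV hf0 (right_ne_zero_of_mul hφh) (φ tF)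
    (fun j => φ (uF j)) (fun j => φ (wF j)) (φ eF) (φ nF) (left_ne_zero_of_mul hφh) (hφ.pos rfl)
    (fun j => hφ.nonneg _) (fun j => hφ.nonneg _) (hφ.nonneg _) (hφ.nonneg _) (fun j => ?_)
    (fun j => ?_) ε₀ s₀ u₀ hu₀ hεs ?_ ?_ (fun j => ?_) (fun j => ?_)
  · rw [← map_mul]
    exact hφ.congr (Eventually.of_forall fun y => rfl)
  · have h := hφp _ (hrel' j)
    rw [map_sub, sub_eq_zero, map_mul, map_mul, map_mul, map_mul] at h
    exact h
  · rw [hφ.coeff_zero]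
    exact zero_add _
  · rw [hφ.coeff_zero]
    exact zero_add _
  · rw [hφ.coeff_zero]
    exact zero_add _
  · rw [hφ.coeff_zero]
    exact zero_add _

theorem stmt_13 (n : ℕ) (hn : 1 ≤ n)
    (U : Set (EuclideanSpace ℂ (Fin n))) (hU : IsOpen U)
    (h0U : (0 : EuclideanSpace ℂ (Fin n)) ∈ U)
    (f : EuclideanSpace ℂ (Fin n) → ℂ) (hf : DifferentiableOn ℂ f U) (hf0 : f 0 = 0) :
    ∃ ε₀ > (0 : ℝ), ∀ z ∈ U, 0 < ‖z‖ → ‖z‖ ≤ ε₀ → f z ≠ 0 →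
      LinearIndependent ℝ ![z, Complex.I • gradLog f z] := by
  by_contra hcon
  push Not at hcon
  have hbad : ∀ k : ℕ, ∃ z : EuclideanSpace ℂ (Fin n), ∃ a : ℝ, z ≠ 0 ∧ ‖z‖ ≤ 1 / ((k : ℝ) + 1) ∧
      f z ≠ 0 ∧ ∀ j, fderiv ℂ f z (EuclideanSpace.single j 1) =
        Complex.I * a * f z * (starRingEnd ℂ) (z j) := fun k => by
    obtain ⟨z, -, hz0, hzk, hfz, hli⟩ := hcon (1 / ((k : ℝ) + 1)) Nat.one_div_pos_of_nat
    obtain ⟨a, ha⟩ := exists_real_of_not_linearIndependent (norm_pos_iff.1 hz0) hfz hli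
    exact ⟨z, a, norm_pos_iff.1 hz0, hzk, hfz, ha⟩
  choose z a hz0 hzk hfz ha using hbad
  have : Nonempty (Fin n) := ⟨⟨0, hn⟩⟩
  have hz : Tendsto z atTop (𝓝 0) :=
    squeeze_zero_norm hzk tendsto_one_div_add_atTop_nhds_zero_nat
  choose j hj using fun k => Finite.exists_max fun i => ‖z k i‖
  let 𝒰 : Ultrafilter ℕ := Ultrafilter.of atTop
  have h𝒰 : (𝒰 : Filter ℕ) ≤ atTop := Ultrafilter.of_le atTop
  -- the index of the largest coordinate is constant along the ultrafilter
  obtain ⟨j₀, hj₀⟩ : ∃ j₀, ∀ᶠ k in 𝒰, j k = j₀ := by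
    obtain ⟨j₀, h⟩ := Ultrafilter.eq_pure_of_finite (𝒰.map j)
    refine ⟨j₀, ?_⟩
    have : ({j₀} : Set (Fin n)) ∈ 𝒰.map j := by rw [h]; exact rfl
    exact this
  have hzj : ∀ k, z k (j k) ≠ 0 := fun k h => by
    refine hz0 k ?_
    ext i
    have := hj k i
    rw [h, norm_zero] at this
    exact norm_le_zero_iff.1 this
  let τ : ℕ → ℂ := fun k => z k (j k)
  let u : ℕ → Fin n → ℂ := fun k i => z k i / τ k
  -- the coefficient `b` may be unbounded, so it is replaced by the point `(ε, s)` of the circle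
  let b : ℕ → ℝ := fun k => a k * ‖τ k‖ ^ 2
  let ε : ℕ → ℝ := fun k => (√(1 + b k ^ 2))⁻¹
  let s : ℕ → ℝ := fun k => b k * ε k
  have hεs : ∀ k, ε k ^ 2 + s k ^ 2 = 1 := fun k => by
    have h : 0 < 1 + b k ^ 2 := by positivity
    simp only [s, ε, mul_pow, inv_pow, Real.sq_sqrt h.le]
    field_simp
  have hτz : ∀ k, τ k • WithLp.toLp 2 (u k) = z k := fun k => by
    ext i
    change τ k * (z k i / τ k) = z k i
    exact mul_div_cancel₀ _ (hzj k)
  let K : Set ((Fin n → ℂ) × ℝ × ℝ) := closedBall 0 1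
  have hK : IsCompact K := isCompact_closedBall 0 1
  have hmem : ∀ k, (u k, ε k, s k) ∈ K := fun k => by
    rw [mem_closedBall_zero_iff, norm_prod_le_iff, norm_prod_le_iff]
    refine ⟨(pi_norm_le_iff_of_nonneg zero_le_one).2 fun i => ?_, ?_, ?_⟩
    · change ‖z k i / τ k‖ ≤ 1
      rw [norm_div]
      exact div_le_one_of_le₀ (hj k i) (norm_nonneg _)
    · change |ε k| ≤ 1
      rw [← sq_le_one_iff_abs_le_one]
      nlinarith [hεs k, sq_nonneg (s k)]
    · change |s k| ≤ 1
      rw [← sq_le_one_iff_abs_le_one]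
      nlinarith [hεs k, sq_nonneg (ε k)]
  obtain ⟨⟨u₀, ε₀, s₀⟩, -, hlim⟩ := hK.ultrafilter_le_nhds' (𝒰.map fun k => (u k, ε k, s k))
    (Eventually.of_forall hmem : ∀ᶠ k in (𝒰 : Filter ℕ), (u k, ε k, s k) ∈ K)
  have hlim' : Tendsto (fun k => (u k, ε k, s k)) 𝒰 (𝓝 (u₀, ε₀, s₀)) := hlim
  have hu : Tendsto u 𝒰 (𝓝 u₀) := (continuous_fst.tendsto _).comp hlim'
  have hε : Tendsto ε 𝒰 (𝓝 ε₀) := ((continuous_fst.comp continuous_snd).tendsto _).comp hlim'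
  have hs : Tendsto s 𝒰 (𝓝 s₀) := ((continuous_snd.comp continuous_snd).tendsto _).comp hlim'
  have hτ : Tendsto τ 𝒰 (𝓝 0) :=
    squeeze_zero_norm (fun k => (PiLp.norm_apply_le (z k) (j k)).trans (hzk k))
      (tendsto_one_div_add_atTop_nhds_zero_nat.mono_left h𝒰)
  have hu₀ : u₀ j₀ = 1 := by
    refine tendsto_nhds_unique (((continuous_apply j₀).tendsto u₀).comp hu)
      (tendsto_const_nhds.congr' ?_)
    filter_upwards [hj₀] with k hk
    change 1 = z k j₀ / z k (j k)
    rw [← hk, div_self (hzj k)]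
  have hεs₀ : ε₀ ^ 2 + s₀ ^ 2 = 1 := by
    refine tendsto_nhds_unique ((hε.pow 2).add (hs.pow 2)) ?_
    simp only [hεs]
    exact tendsto_const_nhds
  have hHol : Hol f := by
    filter_upwards [hU.mem_nhds h0U] with y hy
    exact hf.differentiableAt (hU.mem_nhds hy)
  refine false_of_bad_points 𝒰 hHol hf0 τ u ε s u₀ ε₀ s₀ hτ hu hε hs
    (fun h => by simp [h] at hu₀) hεs₀ (Eventually.of_forall hzj)
    (Eventually.of_forall fun k => ?_) (Eventually.of_forall fun k i => ?_)
  · rw [hτz]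
    exact hfz k
  · rw [hτz, ha]
    have h1 : (starRingEnd ℂ) (z k i) = (starRingEnd ℂ) (τ k) * (starRingEnd ℂ) (u k i) := by
      rw [← map_mul]
      congr 1
      exact (mul_div_cancel₀ _ (hzj k)).symm
    have h2 : (s k : ℂ) = a k * ((starRingEnd ℂ) (τ k) * τ k) * ε k := by
      rw [Complex.conj_mul']
      simp only [s, b]
      push_cast
      ring
    rw [h1, h2]
    ring
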